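/- arXiv:0910.2055 — 2 statements merged into one kernel-verified Lean document; each statement's English description precedes it below -/
import Mathlib

section
/- In the Leech polarization setup, the minimum norm of L(M,N,3) is 6 if there exists a super offender, and is 8 otherwise. -/
noncomputable section

open scoped RealInnerProductSpace Pointwise
open Module

variable {V : Type*} [NormedAddCommGroup V] [InnerProductSpace ℝ V]

/-- `L` is a (full) lattice in `V`: a finitely generated `ℤ`-submodule spanning `V` over `ℝ`. -/
def IsLat (L : Submodule ℤ V) : Prop :=
  L.FG ∧ Submodule.span ℝ (L : Set V) = ⊤

/-- The lattice `L` is integral: all inner products of lattice vectors are integers. -/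
def IsIntegralLat (L : Submodule ℤ V) : Prop :=
  ∀ x ∈ L, ∀ y ∈ L, ∃ n : ℤ, ⟪x, y⟫ = (n : ℝ)

/-- The lattice `L` is even: it is integral and all norms are even integers. -/
def IsEvenLat (L : Submodule ℤ V) : Prop :=
  IsIntegralLat L ∧ ∀ x ∈ L, ∃ n : ℤ, ⟪x, x⟫ = 2 * (n : ℝ)

/-- The lattice `L` is unimodular: the Gram matrix of some `ℤ`-basis has determinant 1. -/
def IsUnimodularLat (L : Submodule ℤ V) : Prop :=
  ∃ (n : ℕ) (b : Basis (Fin n) ℤ L),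
    (Matrix.of fun i j : Fin n => ⟪(b i : V), (b j : V)⟫).det = 1

/-- The minimum norm `μ(L)` of a lattice. -/
def minNorm (L : Submodule ℤ V) : ℝ :=
  sInf {r : ℝ | ∃ x ∈ L, x ≠ 0 ∧ ⟪x, x⟫ = r}

/-- `√2·Υ` is an even unimodular lattice: all norms of `Υ` are integers, all doubled inner
products are integers, and the Gram matrix of the form `2⟪·,·⟫` on a `ℤ`-basis of `Υ` has
determinant 1. -/
def SqrtTwoEvenUnimod (Υ : Submodule ℤ V) : Prop :=
  (∀ x ∈ Υ, ∃ n : ℤ, ⟪x, x⟫ = (n : ℝ)) ∧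
  (∀ x ∈ Υ, ∀ y ∈ Υ, ∃ n : ℤ, 2 * ⟪x, y⟫ = (n : ℝ)) ∧
  ∃ (n : ℕ) (b : Basis (Fin n) ℤ Υ),
    (Matrix.of fun i j : Fin n => 2 * ⟪(b i : V), (b j : V)⟫).det = 1

/-- `M, N` is a polarization of `Υ`: a pair of integral sublattices with
`M + N = Υ` and `M ∩ N = 2Υ`. -/
def IsPolarization (Υ M N : Submodule ℤ V) : Prop :=
  M ≤ Υ ∧ N ≤ Υ ∧ IsIntegralLat M ∧ IsIntegralLat N ∧ M ⊔ N = Υ ∧ M ⊓ N = (2 : ℤ) • Υ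

/-- The sublattice `L_M = {(x_1,…,x_k) ∈ M^k : x_1+⋯+x_k ∈ M ∩ N}` of `V^k`. -/
def LsubM (M N : Submodule ℤ V) (k : ℕ) : Submodule ℤ (PiLp 2 fun _ : Fin k => V) where
  carrier := {v | (∀ i, v i ∈ M) ∧ (∑ i, v i) ∈ M ⊓ N}
  add_mem' := fun {a b} ha hb =>
    ⟨fun i => M.add_mem (ha.1 i) (hb.1 i), by
      have h : (∑ i, (a + b) i) = (∑ i, a i) + ∑ i, b i :=
        (Finset.sum_congr rfl fun i _ => rfl).trans Finset.sum_add_distrib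
      rw [h]; exact (M ⊓ N).add_mem ha.2 hb.2⟩
  zero_mem' := ⟨fun _ => M.zero_mem, by
      have h : (∑ i : Fin k, (0 : PiLp 2 fun _ : Fin k => V) i) = 0 :=
        Finset.sum_eq_zero fun _ _ => rfl
      rw [h]; exact (M ⊓ N).zero_mem⟩
  smul_mem' := fun c a ha =>
    ⟨fun i => M.smul_mem c (ha.1 i), by
      have h : (∑ i, (c • a) i) = c • ∑ i, a i := by
        show (∑ i, c • a i) = c • ∑ i, a i
        exact Finset.smul_sum.symm
      rw [h]; exact (M ⊓ N).smul_mem c ha.2⟩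

/-- The diagonal sublattice `L^N = {(y,…,y) : y ∈ N}` of `V^k`. -/
def LsupN (N : Submodule ℤ V) (k : ℕ) : Submodule ℤ (PiLp 2 fun _ : Fin k => V) where
  carrier := {v | ∃ y ∈ N, ∀ i, v i = y}
  add_mem' := fun {a b} ha hb => by
    obtain ⟨ya, hya, ha⟩ := ha
    obtain ⟨yb, hyb, hb⟩ := hb
    exact ⟨ya + yb, N.add_mem hya hyb, fun i => by
      show a i + b i = ya + yb
      rw [ha i, hb i]⟩
  zero_mem' := ⟨0, N.zero_mem, fun _ => rfl⟩
  smul_mem' := fun c a ha => by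
    obtain ⟨y, hy, h⟩ := ha
    exact ⟨c • y, N.smul_mem c hy, fun i => by
      show c • a i = c • y
      rw [h i]⟩

/-- The lattice `L(M,N,k) = L_M + L^N ⊆ V^k`. -/
def LMN (M N : Submodule ℤ V) (k : ℕ) : Submodule ℤ (PiLp 2 fun _ : Fin k => V) :=
  LsubM M N k ⊔ LsupN N k

/-- The Leech polarization setup: `V` is 24-dimensional, `√2·Υ` is even unimodular with
minimum norm 4, and `M, N` is a polarization of `Υ` by two copies of the Leech lattice. -/
def LeechSetup (Υ M N : Submodule ℤ V) : Prop :=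
  Module.finrank ℝ V = 24 ∧ IsLat Υ ∧ SqrtTwoEvenUnimod Υ ∧
  (∀ v ∈ Υ, v ≠ 0 → 4 ≤ 2 * ⟪v, v⟫) ∧
  IsPolarization Υ M N ∧
  IsLat M ∧ IsEvenLat M ∧ IsUnimodularLat M ∧ minNorm M = 4 ∧
  IsLat N ∧ IsEvenLat N ∧ IsUnimodularLat N ∧ minNorm N = 4

/-- `(w,x,y,z) ∈ N × M × M × M` is admissible if `x + y + z ∈ M ∩ N`. -/
def Admissible (M N : Submodule ℤ V) (w x y z : V) : Prop :=
  w ∈ N ∧ x ∈ M ∧ y ∈ M ∧ z ∈ M ∧ x + y + z ∈ M ⊓ N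

/-- An offender is an admissible quadruple all three of whose associated vectors
`w+x, w+y, w+z` have norm 2. -/
def Offender (M N : Submodule ℤ V) (w x y z : V) : Prop :=
  Admissible M N w x y z ∧
  ⟪w + x, w + x⟫ = 2 ∧ ⟪w + y, w + y⟫ = 2 ∧ ⟪w + z, w + z⟫ = 2

/-- A super offender is an offender with `⟪w,w⟫ = 4` whose multiset of norms
`{⟪x,x⟫, ⟪y,y⟫, ⟪z,z⟫}` equals `{6,6,4}`. -/
def SuperOffender (M N : Submodule ℤ V) (w x y z : V) : Prop :=
  Offender M N w x y z ∧ ⟪w, w⟫ = 4 ∧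
  ({⟪x, x⟫, ⟪y, y⟫, ⟪z, z⟫} : Multiset ℝ) = ({6, 6, 4} : Multiset ℝ)

/-!
All norms of `L(M,N,3)` are even. If a coordinate vanishes, then `w ∈ M ∩ N`, and the other two
coordinates are vectors of `M` with sum in `M ∩ N = 2Υ`, so that a nonzero vector has norm at least
8; otherwise the coordinates are nonzero vectors of `Υ`, of norm at least 2 each. Hence the minimum
norm is 6 or 8, and it is 6 exactly when there is an offender.

An offender can be made super. Poisson summation shows that the theta series of `N` is a modular
form of weight 12; its `q`-expansion begins `1 + 0q`, so it is `(7E₄³ + 5E₆²)/12`, and `N` has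
196560 vectors of norm 4. Two of them congruent modulo `2Υ`, whose nonzero vectors have norm at
least 8, are equal, opposite or orthogonal, so a class contains at most 48 of them, and none lies
in `2Υ`. Since `N / 2Υ` has 4096 classes and `196560 = 48 · 4095`, every nonzero class is hit, and
`w` can be moved within its class to norm 4. Replacing `z` by `-z - 2w` turns `⟪z,z⟫` into
`12 - ⟪z,z⟫`, so the three norms can be taken in `{4, 6}`. The vectors `w + x`, `w + y`, `w + z` are
pairwise orthogonal, so `x + y + z + 2w ∈ 2Υ` has norm `⟪x,x⟫ + ⟪y,y⟫ + ⟪z,z⟫ - 8`, which lies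
between 4 and 10; as the nonzero norms of `2Υ` are multiples of 4 and at least 8, it is 8 and the
norms are 6, 6, 4.
-/

section Poisson

open MeasureTheory Set UnitAddTorus BoxIntegral

section Translates

variable {ι E F : Type*} [SeminormedAddCommGroup E] [NormedAddCommGroup F]

/-- On every ball the translates of `f` by the vectors `s i` are dominated by a summable family,
so that the periodization `∑ i, f (x + s i)` converges locally uniformly. -/
def HasSummableTranslates (f : E → F) (s : ι → E) : Prop :=
  ∀ R : ℝ, ∃ u : ι → ℝ, Summable u ∧ ∀ i x, ‖x‖ ≤ R → ‖f (x + s i)‖ ≤ u i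

theorem HasSummableTranslates.continuous_tsum [CompleteSpace F] {f : E → F} {s : ι → E}
    (hs : HasSummableTranslates f s) (hf : Continuous f) :
    Continuous fun x => ∑' i, f (x + s i) := by
  refine continuous_iff_continuousAt.2 fun x => ?_
  obtain ⟨u, hu, hfu⟩ := hs (‖x‖ + 1)
  have hcont : ContinuousOn (fun x => ∑' i, f (x + s i)) (Metric.ball 0 (‖x‖ + 1)) :=
    continuousOn_tsum (fun i => by fun_prop) hu
      fun i y hy => hfu i y (mem_ball_zero_iff.1 hy).le
  exact hcont.continuousAt (Metric.isOpen_ball.mem_nhds (by simp))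

end Translates

variable {d : Type*}

/-- The inclusion `ℤᵈ → ℝᵈ`. -/
def intVec (m : d → ℤ) : d → ℝ := fun i => m i

/-- The quotient map `ℝᵈ → ℝᵈ/ℤᵈ`. -/
def torusMk : C(d → ℝ, UnitAddTorus d) where
  toFun x i := x i
  continuous_toFun := continuous_pi fun i =>
    (AddCircle.continuous_mk' 1).comp (continuous_apply i)

theorem isQuotientMap_torusMk : Topology.IsQuotientMap (torusMk : C(d → ℝ, UnitAddTorus d)) :=
  (IsOpenQuotientMap.piMap fun _ => QuotientAddGroup.isOpenQuotientMap_mk).isQuotientMap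

theorem torusMk_eq_torusMk_iff {x y : d → ℝ} :
    torusMk x = torusMk y ↔ ∃ m : d → ℤ, x = y + intVec m := by
  have hcoord (i : d) : (x i : UnitAddCircle) = y i ↔ ∃ n : ℤ, x i = y i + n := by
    rw [← sub_eq_zero, ← AddCircle.coe_sub, AddCircle.coe_eq_zero_iff]
    simp only [zsmul_eq_mul, mul_one, eq_sub_iff_add_eq', eq_comm (a := x i)]
  simp only [torusMk, ContinuousMap.coe_mk, funext_iff, hcoord, Classical.skolem, Pi.add_apply,
    intVec]

theorem torusMk_add_intVec (x : d → ℝ) (m : d → ℤ) : torusMk (x + intVec m) = torusMk x :=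
  torusMk_eq_torusMk_iff.2 ⟨m, rfl⟩

variable [Fintype d]

theorem exists_continuousMap_torusMk_eq_tsum {f : (d → ℝ) → ℂ} (hf : Continuous f)
    (hs : HasSummableTranslates f (intVec (d := d))) :
    ∃ F : C(UnitAddTorus d, ℂ), ∀ x, F (torusMk x) = ∑' m, f (x + intVec m) := by
  let P : C(d → ℝ, ℂ) := ⟨_, hs.continuous_tsum hf⟩
  have hP : Function.FactorsThrough P torusMk := by
    intro x y hxy
    obtain ⟨k, rfl⟩ := torusMk_eq_torusMk_iff.1 hxy
    refine Eq.trans (tsum_congr fun m => congrArg f ?_)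
      ((Equiv.addLeft k).tsum_eq fun m => f (y + intVec m))
    ext i
    simp [intVec, add_assoc]
  exact ⟨isQuotientMap_torusMk.lift P hP,
    DFunLike.congr_fun (isQuotientMap_torusMk.lift_comp P hP)⟩

theorem mFourier_torusMk (m : d → ℤ) (x : d → ℝ) :
    mFourier m (torusMk x) = Complex.exp (2 * Real.pi * Complex.I * ∑ i, (m i : ℂ) * x i) := by
  simp only [mFourier, torusMk, ContinuousMap.coe_mk, fourier_coe_apply, ← Complex.exp_sum,
    Finset.mul_sum, Complex.ofReal_one, div_one, mul_assoc]

theorem setIntegral_unitBox {E : Type*} [NormedAddCommGroup E] [NormedSpace ℝ E]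
    (f : (d → ℝ) → E) (m : d → ℤ) :
    ∫ x in (unitPartition.box 1 m : Set (d → ℝ)), f x =
      ∫ x in (unitPartition.box 1 (0 : d → ℤ) : Set (d → ℝ)), f (x + intVec m) := by
  have hpre : (· + intVec m) ⁻¹' (unitPartition.box 1 m : Set (d → ℝ)) =
      (unitPartition.box 1 (0 : d → ℤ) : Set (d → ℝ)) := by
    ext x
    simp only [mem_preimage, Box.mem_coe, unitPartition.mem_box_iff', intVec, Pi.add_apply,
      Pi.zero_apply, Nat.cast_one, one_mul, Int.cast_zero, lt_add_iff_pos_left,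
      add_comm _ (1 : ℝ), add_le_add_iff_right, add_zero]
  rw [← hpre]
  exact ((measurePreserving_add_right volume (intVec m)).setIntegral_preimage_emb
    (MeasurableEquiv.addRight _).measurableEmbedding f _).symm

theorem hasSum_setIntegral_unitBox {E : Type*} [NormedAddCommGroup E] [NormedSpace ℝ E]
    {f : (d → ℝ) → E} (hf : Integrable f) :
    HasSum (fun m : d → ℤ => ∫ x in (unitPartition.box 1 (0 : d → ℤ) : Set (d → ℝ)),
      f (x + intVec m)) (∫ x, f x) := by
  have hfiber (m : d → ℤ) :
      (unitPartition.box 1 m : Set (d → ℝ)) = unitPartition.index 1 ⁻¹' {m} := by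
    ext x
    exact unitPartition.mem_box_iff_index
  have hdisj : Pairwise (Function.onFun Disjoint
      fun m : d → ℤ => (unitPartition.box 1 m : Set (d → ℝ))) := by
    simpa only [hfiber] using pairwise_disjoint_fiber (unitPartition.index 1)
  have hunion : ⋃ m : d → ℤ, (unitPartition.box 1 m : Set (d → ℝ)) = univ := by
    simp only [hfiber, ← preimage_iUnion, iUnion_of_singleton, preimage_univ]
  simp only [← setIntegral_unitBox f]
  simpa only [hunion, Measure.restrict_univ] using hasSum_integral_iUnion
    (fun m : d → ℤ => (unitPartition.box 1 m).measurableSet_coe) hdisj (hunion ▸ hf.integrableOn)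

local instance : MeasureSpace UnitAddCircle := ⟨AddCircle.haarAddCircle⟩

theorem mFourierCoeff_of_eq_tsum {f : (d → ℝ) → ℂ} (hf : Integrable f) {F : UnitAddTorus d → ℂ}
    (hF : ∀ x, F (torusMk x) = ∑' m, f (x + intVec m)) (m : d → ℤ) :
    mFourierCoeff F m = ∫ x, mFourier (-m) (torusMk x) * f x := by
  have hbox : {x : d → ℝ | ∀ i, x i ∈ Ioc ((0 : d → ℝ) i) ((0 : d → ℝ) i + 1)} =
      unitPartition.box 1 (0 : d → ℤ) := by
    ext x
    simp
  have hint : Integrable fun x => mFourier (-m) (torusMk x) * f x :=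
    hf.bdd_mul (c := 1) (by fun_prop) (.of_forall fun x =>
      ((mFourier (-m)).norm_coe_le_norm _).trans mFourier_norm.le)
  have hswap := hasSum_integral_of_summable_integral_norm
    (μ := volume.restrict (unitPartition.box 1 (0 : d → ℤ) : Set (d → ℝ)))
    (fun k => (hint.comp_add_right (intVec k)).integrableOn)
    (hasSum_setIntegral_unitBox hint.norm).summable
  rw [mFourierCoeff_eq_integral _ _ (0 : d → ℝ), hbox, ← (hasSum_setIntegral_unitBox hint).tsum_eq,
    hswap.tsum_eq]
  refine integral_congr_ae (.of_forall fun x => ?_)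
  simp only [torusMk_add_intVec, tsum_mul_left, ← hF x, smul_eq_mul]
  rfl

theorem tsum_intVec_eq_tsum_integral_mFourier {f : (d → ℝ) → ℂ} (hf : Continuous f)
    (hs : HasSummableTranslates f (intVec (d := d))) (hint : Integrable f)
    (hsum : Summable fun m : d → ℤ => ∫ x, mFourier (-m) (torusMk x) * f x) :
    ∑' m : d → ℤ, f (intVec m) = ∑' m : d → ℤ, ∫ x, mFourier (-m) (torusMk x) * f x := by
  obtain ⟨F, hF⟩ := exists_continuousMap_torusMk_eq_tsum hf hs
  have hcoeff := mFourierCoeff_of_eq_tsum hint hF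
  have hseries := hasSum_mFourier_series_apply_of_summable
    (hsum.congr fun m => (hcoeff m).symm) (torusMk 0)
  have hone (m : d → ℤ) : mFourier m (torusMk 0) = 1 := by simp [mFourier_torusMk]
  simp only [hone, smul_eq_mul, mul_one, hF, zero_add] at hseries
  rw [← hseries.tsum_eq]
  exact tsum_congr hcoeff

end Poisson

section Lattice

open MeasureTheory

open scoped FourierTransform

variable {L : Submodule ℤ V}

theorem discreteTopology_of_norm_int (hL : ∀ x ∈ L, ∃ n : ℤ, ⟪x, x⟫ = n) :
    DiscreteTopology L := by
  refine discreteTopology_of_isOpen_singleton_zero ?_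
  convert! Metric.isOpen_ball (x := (0 : L)) (ε := 1)
  ext v
  refine ⟨fun hv => by simp [Set.mem_singleton_iff.1 hv], fun hv => ?_⟩
  obtain ⟨n, hn⟩ := hL v v.2
  have hnorm : ‖(v : V)‖ < 1 := by simpa using hv
  have hlt : n < 1 := by
    rify
    rw [← hn, real_inner_self_eq_norm_sq]
    exact pow_lt_one₀ (norm_nonneg _) hnorm two_ne_zero
  have hnonneg : 0 ≤ n := by
    rify
    exact hn ▸ real_inner_self_nonneg
  have hzero : ⟪(v : V), v⟫ = 0 := by
    rw [hn, le_antisymm (Int.lt_add_one_iff.1 hlt) hnonneg, Int.cast_zero]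
  exact Subtype.ext (inner_self_eq_zero.1 hzero)

variable {ι : Type*} [Fintype ι]

theorem exists_equiv_inner_eq [DecidableEq ι] (hint : IsIntegralLat L) (b : Basis ι ℤ L)
    (hdet : (Matrix.gram ℝ fun i => (b i : V)).det = 1) :
    ∃ e : L ≃ (ι → ℤ), ∀ w i, (e w i : ℝ) = ⟪(b i : V), w⟫ := by
  choose g hg using fun i j => hint (b i) (b i).2 (b j) (b j).2
  let G := Matrix.of g
  have hG : G.det = 1 := by
    rw [← Int.cast_inj (α := ℝ), Int.cast_det, Int.cast_one, ← hdet]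
    congr 1
    ext i j
    exact (hg i j).symm
  have hmul : G * G.adjugate = 1 := by rw [Matrix.mul_adjugate, hG, one_smul]
  have hmul' : G.adjugate * G = 1 := by rw [Matrix.adjugate_mul, hG, one_smul]
  refine ⟨(b.equivFun.trans (Matrix.toLin'OfInv hmul' hmul)).toEquiv, fun w i => ?_⟩
  have hw : (w : V) = ∑ j, b.equivFun w j • (b j : V) := by
    simpa only [Submodule.coe_sum, Submodule.coe_smul] using
      congrArg Subtype.val (b.sum_equivFun w).symm
  rw [hw, inner_sum]
  simp only [← Int.cast_smul_eq_zsmul ℝ, real_inner_smul_right, hg]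
  simp [Matrix.toLin'OfInv, Matrix.mulVec, dotProduct, G, mul_comm]

variable [FiniteDimensional ℝ V] [DiscreteTopology L] [IsZLattice ℝ L]

omit [Fintype ι] in
theorem ofZLatticeBasis_equivFun_symm_intVec [Finite ι] (b : Basis ι ℤ L) (m : ι → ℤ) :
    (b.ofZLatticeBasis ℝ L).equivFun.symm (intVec m) = (b.equivFun.symm m : L) := by
  have := Fintype.ofFinite ι
  simp [Basis.equivFun_symm_apply, intVec, ← Int.cast_smul_eq_zsmul ℝ]

theorem HasSummableTranslates.comp_equivFun_symm {F : Type*} [NormedAddCommGroup F] {f : V → F}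
    (b : Basis ι ℤ L) (hs : HasSummableTranslates f ((↑) : L → V)) :
    HasSummableTranslates (f ∘ (b.ofZLatticeBasis ℝ L).equivFun.symm) intVec := by
  let φ := ((b.ofZLatticeBasis ℝ L).equivFunL.symm : (ι → ℝ) →L[ℝ] V)
  intro R
  obtain ⟨u, hu, hfu⟩ := hs (‖φ‖ * R)
  refine ⟨u ∘ b.equivFun.symm, hu.comp_injective b.equivFun.symm.injective, fun m x hx => ?_⟩
  have hφx : ‖φ x‖ ≤ ‖φ‖ * R := φ.le_opNorm_of_le hx
  have hφm : φ (intVec m) = (b.equivFun.symm m : L) := ofZLatticeBasis_equivFun_symm_intVec b m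
  change ‖f (φ (x + intVec m))‖ ≤ _
  rw [map_add, hφm]
  exact hfu _ _ hφx

variable [MeasurableSpace V] [BorelSpace V]

theorem covolume_sq_eq_det_gram [DecidableEq ι] (b : Basis ι ℤ L) :
    ZLattice.covolume L ^ 2 = (Matrix.gram ℝ fun i => (b i : V)).det := by
  have hcard : finrank ℝ V = Fintype.card ι := finrank_eq_card_basis (b.ofZLatticeBasis ℝ L)
  let o := (stdOrthonormalBasis ℝ V).reindex
    (Fintype.equivOfCardEq (α := Fin _) (β := ι) (by simp [hcard]))
  have hvol : volume.real (ZSpan.fundamentalDomain o.toBasis) = 1 := by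
    rw [measureReal_congr (ZSpan.fundamentalDomain_ae_parallelepiped o.toBasis volume),
      measureReal_def, o.coe_toBasis, o.volume_parallelepiped, ENNReal.toReal_one]
  rw [ZLattice.covolume_eq_det_mul_measureReal L volume b o.toBasis, hvol, mul_one, sq_abs,
    Matrix.gram_eq_conjTranspose_mul o, Matrix.det_mul, Matrix.det_conjTranspose, star_trivial, sq,
    Basis.det_apply]
  rfl

theorem measurePreserving_ofZLatticeBasis_equivFun_symm (b : Basis ι ℤ L)
    (hL : ZLattice.covolume L = 1) :
    MeasurePreserving (b.ofZLatticeBasis ℝ L).equivFun.symm volume volume := by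
  let e := (b.ofZLatticeBasis ℝ L).equivFunL.toHomeomorph.toMeasurableEquiv
  have he : MeasurePreserving e volume volume := by
    refine ⟨e.measurable, Measure.ext fun s hs => ?_⟩
    have himage := ZLattice.volume_image_eq_volume_div_covolume' L b
      (e.measurable hs).nullMeasurableSet
    rw [hL, ENNReal.ofReal_one, div_one] at himage
    rw [Measure.map_apply e.measurable hs, ← himage]
    exact congrArg volume (Set.image_preimage_eq s e.surjective)
  exact he.symm

theorem integral_mFourier_torusMk_mul (b : Basis ι ℤ L) (hL : ZLattice.covolume L = 1)
    {m : ι → ℤ} {w : V} (hm : ∀ i, (m i : ℝ) = ⟪(b i : V), w⟫) (f : V → ℂ) :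
    ∫ x, UnitAddTorus.mFourier (-m) (torusMk x) *
      f ((b.ofZLatticeBasis ℝ L).equivFun.symm x) = 𝓕 f w := by
  have hφ := measurePreserving_ofZLatticeBasis_equivFun_symm b hL
  rw [Real.fourier_eq', ← hφ.integral_comp
    (b.ofZLatticeBasis ℝ L).equivFunL.symm.toHomeomorph.measurableEmbedding]
  refine integral_congr_ae (.of_forall fun x => ?_)
  simp only [mFourier_torusMk, smul_eq_mul, Basis.equivFun_symm_apply, sum_inner,
    Basis.ofZLatticeBasis_apply, real_inner_smul_left, ← hm]
  congr 2
  push_cast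
  simp only [Pi.neg_apply, Int.cast_neg, neg_mul, Finset.sum_neg_distrib, mul_comm (x _ : ℂ)]
  ring

theorem tsum_eq_tsum_fourier (hint : IsIntegralLat L) (hL : ZLattice.covolume L = 1)
    {f : V → ℂ} (hf : Continuous f) (hs : HasSummableTranslates f ((↑) : L → V))
    (hfi : Integrable f) (hsum : Summable fun w : L => 𝓕 f w) :
    ∑' v : L, f v = ∑' w : L, 𝓕 f w := by
  classical
  let b := Free.chooseBasis ℤ L
  have hdet : (Matrix.gram ℝ fun i => (b i : V)).det = 1 := by
    rw [← covolume_sq_eq_det_gram b, hL, one_pow]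
  obtain ⟨e, he⟩ := exists_equiv_inner_eq hint b hdet
  let φ := (b.ofZLatticeBasis ℝ L).equivFunL.symm
  have hφ := measurePreserving_ofZLatticeBasis_equivFun_symm b hL
  have hcoeff (w : L) := integral_mFourier_torusMk_mul b hL (he w) f
  have hpoisson := tsum_intVec_eq_tsum_integral_mFourier (hf.comp φ.continuous)
    (hs.comp_equivFun_symm b)
    ((hφ.integrable_comp_emb φ.toHomeomorph.measurableEmbedding).2 hfi)
    (e.summable_iff.1 (hsum.congr fun w => (hcoeff w).symm))
  calc ∑' v : L, f v
      = ∑' m, f (b.equivFun.symm m : L) := (b.equivFun.symm.toEquiv.tsum_eq fun v : L => f v).symm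
    _ = ∑' w, ∫ x, UnitAddTorus.mFourier (-e w) (torusMk x) * f (φ x) := by
      simp only [← ofZLatticeBasis_equivFun_symm_intVec]
      exact hpoisson.trans (e.tsum_eq _).symm
    _ = ∑' w : L, 𝓕 f w := tsum_congr hcoeff

end Lattice

section Gaussian

open MeasureTheory Complex

open scoped Real FourierTransform

theorem exp_neg_mul_sq_le {a t : ℝ} (ha : 0 < a) (ht : 0 < t) (k : ℕ) :
    Real.exp (-(a * t ^ 2)) ≤ (k.factorial / a ^ k) * t⁻¹ ^ (2 * k) := by
  calc Real.exp (-(a * t ^ 2)) ≤ ((a * t ^ 2) ^ k / k.factorial)⁻¹ := by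
        rw [Real.exp_neg]
        gcongr
        exact Real.pow_div_factorial_le_exp _ (by positivity) k
    _ = (k.factorial / a ^ k) * t⁻¹ ^ (2 * k) := by
        rw [mul_pow, ← pow_mul, inv_pow]
        field_simp

theorem norm_cexp_pi_mul_I_mul_sq (τ : ℂ) (r : ℝ) :
    ‖cexp (π * I * τ * (r : ℂ) ^ 2)‖ = Real.exp (-(π * τ.im * r ^ 2)) := by
  have hτ : π * I * τ * (r : ℂ) ^ 2 = ((π * r ^ 2 : ℝ) : ℂ) * (I * τ) := by
    push_cast
    ring
  rw [norm_exp, hτ, re_ofReal_mul, I_mul_re]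
  ring_nf

theorem cexp_pi_mul_I_mul_sq_eq_qParam_pow {r : ℝ} {m : ℕ} (hr : r ^ 2 = 2 * m) (τ : ℂ) :
    cexp (π * I * τ * (r : ℂ) ^ 2) = Function.Periodic.qParam 1 τ ^ m := by
  have hr' : (r : ℂ) ^ 2 = 2 * m := by exact_mod_cast hr
  rw [Function.Periodic.qParam, ← exp_nat_mul, hr']
  congr 1
  push_cast
  ring

variable [FiniteDimensional ℝ V] (L : Submodule ℤ V) [DiscreteTopology L]

theorem summable_exp_neg_mul_norm_sq {a : ℝ} (ha : 0 < a) :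
    Summable fun v : L => Real.exp (-(a * ‖(v : V)‖ ^ 2)) := by
  let k := finrank ℤ L + 1
  have hsum := (ZLattice.summable_norm_pow_inv L (2 * k) (by lia)).mul_left (k.factorial / a ^ k)
  refine hsum.of_norm_bounded_eventually ?_
  refine (Set.finite_singleton (0 : L)).subset fun v hv => ?_
  by_contra h0
  refine hv ?_
  change ‖Real.exp _‖ ≤ _
  rw [Real.norm_of_nonneg (Real.exp_pos _).le]
  exact exp_neg_mul_sq_le ha (norm_pos_iff.2 h0) k

theorem hasSummableTranslates_gaussian {τ : ℂ} (hτ : 0 < τ.im) :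
    HasSummableTranslates (fun v : V => cexp (π * I * τ * (‖v‖ : ℂ) ^ 2)) ((↑) : L → V) := by
  intro R
  set a := π * τ.im
  have ha : 0 < a := by positivity
  refine ⟨_, (summable_exp_neg_mul_norm_sq L (half_pos ha)).mul_left (Real.exp (a * R ^ 2)),
    fun v x hx => ?_⟩
  have hnorm : ‖(v : V)‖ ^ 2 ≤ 2 * ‖x + v‖ ^ 2 + 2 * R ^ 2 := by
    have htriangle : ‖(v : V)‖ ≤ ‖x + v‖ + R := by
      calc ‖(v : V)‖ = ‖(x + v) - x‖ := by rw [add_sub_cancel_left]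
        _ ≤ ‖x + v‖ + R := (norm_sub_le _ _).trans (by gcongr)
    nlinarith [norm_nonneg (v : V), sq_nonneg (‖x + v‖ - R)]
  rw [norm_cexp_pi_mul_I_mul_sq, ← Real.exp_add, Real.exp_le_exp]
  nlinarith

variable [MeasurableSpace V] [BorelSpace V]

theorem integrable_cexp_pi_mul_I_mul_norm_sq {τ : ℂ} (hτ : 0 < τ.im) :
    Integrable fun v : V => cexp (π * I * τ * (‖v‖ : ℂ) ^ 2) := by
  have hre : 0 < (-(π * I * τ)).re := by
    rw [show (-(π * I * τ)).re = π * τ.im by simp]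
    positivity
  simpa only [neg_neg, zero_mul, add_zero] using
    GaussianFourier.integrable_cexp_neg_mul_sq_norm_add hre 0 (0 : V)

theorem fourier_cexp_neg_inv_mul_norm_sq {τ : ℂ} (hτ : 0 < τ.im) (w : V) :
    𝓕 (fun v : V => cexp (π * I * (-τ⁻¹) * (‖v‖ : ℂ) ^ 2)) w =
      (-I * τ) ^ (finrank ℝ V / 2 : ℂ) * cexp (π * I * τ * (‖w‖ : ℂ) ^ 2) := by
  have hτ0 : τ ≠ 0 := fun h => by simp [h] at hτ
  have him : 0 < (-τ⁻¹).im := by simpa using UpperHalfPlane.im_inv_neg_coe_pos ⟨τ, hτ⟩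
  have hre : 0 < (π * I / τ).re := by
    rw [show (π * I / τ).re = π * (-τ⁻¹).im by simp [div_eq_mul_inv, mul_assoc]]
    positivity
  have hgauss (v : V) :
      cexp (π * I * (-τ⁻¹) * (‖v‖ : ℂ) ^ 2) = cexp (-(π * I / τ) * ‖v‖ ^ 2) := by
    rw [div_eq_mul_inv, mul_neg]
  have hfactor : (π : ℂ) / (π * I / τ) = -I * τ := by
    field_simp
    simp
  simp only [hgauss]
  rw [fourier_gaussian_innerProductSpace hre, hfactor]
  congr 2
  field_simp
  simp

end Gaussian

section ThetaSeries

open MeasureTheory Complex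

open scoped Real FourierTransform

/-- The theta series `∑ v ∈ L, q ^ (⟪v, v⟫ / 2)` of a lattice, where `q = exp (2πiτ)`, as a function
of `τ` (with junk values off the upper half-plane). -/
def thetaSeries (L : Submodule ℤ V) (τ : ℂ) : ℂ :=
  ∑' v : L, cexp (π * I * τ * (‖(v : V)‖ : ℂ) ^ 2)

/-- The vectors of `L` of norm `⟪v, v⟫ = r`. -/
def shell (L : Submodule ℤ V) (r : ℝ) : Set V :=
  {v | v ∈ L ∧ ⟪v, v⟫ = r}

section EvenLattice

variable {L : Submodule ℤ V}

theorem IsEvenLat.exists_norm_sq_eq (hL : IsEvenLat L) :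
    ∃ Q : L → ℕ, ∀ v : L, ‖(v : V)‖ ^ 2 = 2 * Q v := by
  have hnat (v : L) : ∃ m : ℕ, ‖(v : V)‖ ^ 2 = 2 * m := by
    obtain ⟨m, hm⟩ := hL.2 v v.2
    rw [real_inner_self_eq_norm_sq] at hm
    have hm0 : 0 ≤ m := by
      rify
      nlinarith [sq_nonneg ‖(v : V)‖]
    lift m to ℕ using hm0
    exact ⟨m, hm⟩
  exact Classical.skolem.1 hnat

theorem thetaSeries_one_add (hL : IsEvenLat L) (τ : ℂ) :
    thetaSeries L (1 + τ) = thetaSeries L τ := by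
  obtain ⟨Q, hQ⟩ := hL.exists_norm_sq_eq
  have hper : Function.Periodic.qParam 1 (1 + τ) = Function.Periodic.qParam 1 τ := by
    simp [Function.Periodic.qParam, mul_add, exp_add]
  unfold thetaSeries
  simp only [cexp_pi_mul_I_mul_sq_eq_qParam_pow (hQ _), hper]

end EvenLattice

variable [FiniteDimensional ℝ V] (L : Submodule ℤ V) [DiscreteTopology L]

theorem finite_shell (r : ℝ) : (shell L r).Finite := by
  have : DiscreteTopology L.toAddSubgroup := ‹DiscreteTopology L›
  refine (Metric.finite_isBounded_inter_isClosed (K := Metric.closedBall (0 : V) √r)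
    DiscreteTopology.isDiscrete Metric.isBounded_closedBall
    (AddSubgroup.isClosed_of_discrete (H := L.toAddSubgroup))).subset ?_
  rintro v ⟨hv, rfl⟩
  refine ⟨?_, hv⟩
  simp

theorem exists_summable_norm_thetaSeries_le {δ : ℝ} (hδ : 0 < δ) :
    ∃ u : L → ℝ, Summable u ∧ ∀ (v : L) (τ : ℂ), δ ≤ τ.im →
      ‖cexp (π * I * τ * (‖(v : V)‖ : ℂ) ^ 2)‖ ≤ u v := by
  refine ⟨_, summable_exp_neg_mul_norm_sq L (a := π * δ) (by positivity), fun v τ hτ => ?_⟩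
  rw [norm_cexp_pi_mul_I_mul_sq]
  gcongr

theorem summable_thetaSeries {τ : ℂ} (hτ : 0 < τ.im) :
    Summable fun v : L => cexp (π * I * τ * (‖(v : V)‖ : ℂ) ^ 2) := by
  obtain ⟨u, hu, hbound⟩ := exists_summable_norm_thetaSeries_le L hτ
  exact hu.of_norm_bounded fun v => hbound v τ le_rfl

theorem differentiableOn_thetaSeries : DifferentiableOn ℂ (thetaSeries L) {τ | 0 < τ.im} := by
  intro τ hτ
  obtain ⟨u, hu, hbound⟩ := exists_summable_norm_thetaSeries_le L (half_pos hτ)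
  have hopen : IsOpen {z : ℂ | τ.im / 2 < z.im} := isOpen_lt continuous_const continuous_im
  have hdiff : DifferentiableOn ℂ (thetaSeries L) {z | τ.im / 2 < z.im} :=
    differentiableOn_tsum_of_summable_norm hu (fun v => by fun_prop) hopen
      fun v z hz => hbound v z (le_of_lt hz)
  have hmem : τ ∈ {z : ℂ | τ.im / 2 < z.im} := half_lt_self (a := τ.im) hτ
  exact (hdiff.differentiableAt (hopen.mem_nhds hmem)).differentiableWithinAt

theorem isBoundedAtImInfty_thetaSeries :
    UpperHalfPlane.IsBoundedAtImInfty fun τ => thetaSeries L τ := by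
  obtain ⟨u, hu, hbound⟩ := exists_summable_norm_thetaSeries_le L one_pos
  exact UpperHalfPlane.isBoundedAtImInfty_iff.2 ⟨∑' v, u v, 1, fun τ hτ =>
    tsum_of_norm_bounded hu.hasSum fun v => hbound v τ hτ⟩

variable {L}

theorem hasSum_qParam_thetaSeries (hL : IsEvenLat L) {τ : ℂ} (hτ : 0 < τ.im) :
    HasSum (fun m : ℕ => ((shell L (2 * m)).ncard : ℂ) • Function.Periodic.qParam 1 τ ^ m)
      (thetaSeries L τ) := by
  obtain ⟨Q, hQ⟩ := hL.exists_norm_sq_eq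
  refine ((Equiv.sigmaFiberEquiv Q).hasSum_iff.2
    (summable_thetaSeries L hτ).hasSum).sigma fun m => ?_
  let e : {v : L // Q v = m} ≃ shell L (2 * m) :=
    { toFun v := ⟨(v.1 : V), v.1.2, by rw [real_inner_self_eq_norm_sq, hQ, v.2]⟩
      invFun v := ⟨⟨v, v.2.1⟩, by
        have hv := v.2.2
        rw [real_inner_self_eq_norm_sq, hQ ⟨v, v.2.1⟩] at hv
        exact_mod_cast mul_left_cancel₀ two_ne_zero (hv : (2 : ℝ) * _ = 2 * _)⟩
      left_inv _ := rfl
      right_inv _ := rfl }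
  have := (finite_shell L (2 * m)).to_subtype
  have : Fintype {v : L // Q v = m} := @Fintype.ofFinite _ (Finite.of_equiv _ e.symm)
  have hterm (v : {v : L // Q v = m}) :
      cexp (π * I * τ * (‖(v : V)‖ : ℂ) ^ 2) = Function.Periodic.qParam 1 τ ^ m :=
    (cexp_pi_mul_I_mul_sq_eq_qParam_pow (hQ v) τ).trans (by rw [v.2])
  have hcard : (shell L (2 * m)).ncard = Fintype.card {v : L // Q v = m} := by
    rw [← Nat.card_coe_set_eq, ← Nat.card_congr e, Nat.card_eq_fintype_card]
  rw [hcard, smul_eq_mul, ← nsmul_eq_mul, ← Finset.card_univ, ← Finset.sum_const,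
    ← Finset.sum_congr rfl fun v _ => hterm v]
  exact hasSum_fintype _

variable [IsZLattice ℝ L] [MeasurableSpace V] [BorelSpace V]

theorem thetaSeries_neg_inv (hint : IsIntegralLat L) (hL : ZLattice.covolume L = 1) {τ : ℂ}
    (hτ : 0 < τ.im) :
    thetaSeries L (-τ⁻¹) = (-I * τ) ^ (finrank ℝ V / 2 : ℂ) * thetaSeries L τ := by
  have him : 0 < (-τ⁻¹).im := by simpa using UpperHalfPlane.im_inv_neg_coe_pos ⟨τ, hτ⟩
  have hfourier (w : V) := fourier_cexp_neg_inv_mul_norm_sq hτ w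
  have hpoisson := tsum_eq_tsum_fourier hint hL (by fun_prop)
    (hasSummableTranslates_gaussian L him) (integrable_cexp_pi_mul_I_mul_norm_sq him)
    (by simpa only [hfourier] using (summable_thetaSeries L hτ).mul_left _)
  unfold thetaSeries
  simpa only [hfourier, tsum_mul_left] using hpoisson

end ThetaSeries

section WeightTwelve

open ModularForm UpperHalfPlane EisensteinSeries

open scoped MatrixGroups CongruenceSubgroup

theorem modularForm_eq_of_qExpansion_coeff_eq {k : ℤ} {f g : ModularForm 𝒮ℒ k}
    (h : ∀ i ≤ k.toNat / 12, (qExpansion 1 f).coeff i = (qExpansion 1 g).coeff i) : f = g := by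
  have hsub : qExpansion 1 (f - g : ModularForm 𝒮ℒ k) = qExpansion 1 f - qExpansion 1 g :=
    ModularForm.qExpansion_sub one_pos one_mem_strictPeriods_SL f g
  have horder : ((k.toNat / 12 + 1 : ℕ) : ℕ∞) ≤ (qExpansion 1 (f - g : ModularForm 𝒮ℒ k)).order :=
    PowerSeries.nat_le_order _ _ fun i hi => by
      rw [hsub, map_sub, h i (Nat.le_of_lt_succ hi), sub_self]
  exact sub_eq_zero.1 (sturm_bound_levelOne
    (lt_of_lt_of_le (by exact_mod_cast Nat.lt_succ_self _) horder))

theorem qExpansion_smul_add_smul {k : ℤ} (a b : ℂ) (f g : ModularForm 𝒮ℒ k) :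
    qExpansion 1 (a • f + b • g : ModularForm 𝒮ℒ k) =
      a • qExpansion 1 f + b • qExpansion 1 g := by
  rw [← ModularForm.qExpansion_smul one_pos one_mem_strictPeriods_SL a f,
    ← ModularForm.qExpansion_smul one_pos one_mem_strictPeriods_SL b g]
  exact ModularForm.qExpansion_add one_pos one_mem_strictPeriods_SL (a • f) (b • g)

/-- The extremal modular form of weight 12, whose `q`-expansion begins `1 + 0q`: the `q`-expansions
of `E₄³` and `E₆²` begin `1 + 720q` and `1 - 1008q`, and `7 * 720 = 5 * 1008`. -/
def extremalForm : ModularForm 𝒮ℒ 12 :=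
  (7 / 12 : ℂ) • ModularForm.mcast (by decide) (E₄.pow 3) +
    (5 / 12 : ℂ) • ModularForm.mcast (by decide) (E₆.pow 2)

theorem qExpansion_extremalForm :
    qExpansion 1 extremalForm =
      (7 / 12 : ℂ) • qExpansion 1 E₄ ^ 3 + (5 / 12 : ℂ) • qExpansion 1 E₆ ^ 2 := by
  have hcube : qExpansion 1 (E₄.pow 3) = qExpansion 1 E₄ ^ 3 :=
    ModularForm.qExpansion_pow one_pos one_mem_strictPeriods_SL E₄ 3
  have hsq : qExpansion 1 (E₆.pow 2) = qExpansion 1 E₆ ^ 2 :=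
    ModularForm.qExpansion_pow one_pos one_mem_strictPeriods_SL E₆ 2
  rw [extremalForm, qExpansion_smul_add_smul, coe_mcast, coe_mcast, hcube, hsq]

theorem E₄_qExpansion_coeff_two : (qExpansion 1 E₄).coeff 2 = 2160 := by
  norm_num [E_qExpansion_coeff _ ⟨2, rfl⟩, show bernoulli 4 = -1 / 30 by decide +kernel,
    show ArithmeticFunction.sigma 3 2 = 9 by decide +kernel]

theorem E₆_qExpansion_coeff_two : (qExpansion 1 E₆).coeff 2 = -16632 := by
  norm_num [E_qExpansion_coeff _ ⟨3, rfl⟩, show bernoulli 6 = 1 / 42 by decide +kernel,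
    show ArithmeticFunction.sigma 5 2 = 33 by decide +kernel]

theorem extremalForm_qExpansion_coeff :
    (qExpansion 1 extremalForm).coeff 0 = 1 ∧ (qExpansion 1 extremalForm).coeff 1 = 0 ∧
      (qExpansion 1 extremalForm).coeff 2 = 196560 := by
  rw [qExpansion_extremalForm]
  refine ⟨?_, ?_, ?_⟩ <;>
  norm_num [pow_succ, PowerSeries.coeff_mul, -PowerSeries.coeff_zero_eq_constantCoeff,
    Finset.Nat.antidiagonal_succ, E_qExpansion_coeff_zero _ ⟨2, rfl⟩,
    E_qExpansion_coeff_zero _ ⟨3, rfl⟩, E₄_qExpansion_coeff_one, E₆_qExpansion_coeff_one,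
    E₄_qExpansion_coeff_two, E₆_qExpansion_coeff_two]

theorem qExpansion_coeff_two_of_coeff_zero_one {f : ModularForm 𝒮ℒ 12}
    (h0 : (qExpansion 1 f).coeff 0 = 1) (h1 : (qExpansion 1 f).coeff 1 = 0) :
    (qExpansion 1 f).coeff 2 = 196560 := by
  obtain ⟨he0, he1, he2⟩ := extremalForm_qExpansion_coeff
  have hf : f = extremalForm := modularForm_eq_of_qExpansion_coeff_eq fun i hi => by
    have hi' : i ≤ 1 := hi
    interval_cases i
    · rw [h0, he0]
    · rw [h1, he1]
  rw [hf, he2]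

end WeightTwelve

section ThetaModular

open UpperHalfPlane ModularForm

open scoped MatrixGroups CongruenceSubgroup Manifold

theorem thetaSeries_slash_T {L : Submodule ℤ V} (hL : IsEvenLat L) (k : ℤ) :
    (fun τ : ℍ => thetaSeries L τ) ∣[k] ModularGroup.T = fun τ : ℍ => thetaSeries L τ := by
  ext τ
  have hdenom : denom ModularGroup.T τ = 1 := by
    rw [ModularGroup.denom_apply]
    simp [ModularGroup.T]
  rw [ModularForm.SL_slash_apply, hdenom, modular_T_smul]
  simp [thetaSeries_one_add hL]

variable [FiniteDimensional ℝ V] [MeasurableSpace V] [BorelSpace V] {L : Submodule ℤ V}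
  [DiscreteTopology L] [IsZLattice ℝ L] {k : ℤ}

theorem thetaSeries_slash_S (hint : IsIntegralLat L) (hL : ZLattice.covolume L = 1)
    (hV : finrank ℝ V = 2 * k) (hk : 4 ∣ k) :
    (fun τ : ℍ => thetaSeries L τ) ∣[k] ModularGroup.S = fun τ : ℍ => thetaSeries L τ := by
  ext τ
  obtain ⟨j, rfl⟩ := hk
  have hexp : (finrank ℝ V / 2 : ℂ) = (4 * j : ℤ) := by
    rw [div_eq_iff two_ne_zero, mul_comm]
    exact_mod_cast hV
  have hfactor : (-Complex.I * τ) ^ (finrank ℝ V / 2 : ℂ) = (τ : ℂ) ^ (4 * j) := by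
    have hI : (-Complex.I) ^ (4 : ℤ) = 1 := by
      rw [zpow_ofNat, Even.neg_pow ⟨2, rfl⟩, Complex.I_pow_four]
    rw [hexp, Complex.cpow_intCast, mul_zpow, zpow_mul, hI, one_zpow, one_mul]
  have hτ : (τ : ℂ) ^ (4 * j) ≠ 0 := zpow_ne_zero _ (ne_zero τ)
  rw [ModularForm.SL_slash_apply, ModularGroup.denom_S, modular_S_smul]
  change thetaSeries L (-(τ : ℂ))⁻¹ * _ = _
  rw [inv_neg, thetaSeries_neg_inv hint hL τ.2, hfactor, zpow_neg]
  field_simp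

/-- The theta series of an even lattice of covolume one, as a modular form of weight half the rank;
the divisibility of the weight by four makes the sign in the inversion formula trivial. -/
def thetaModularForm (heven : IsEvenLat L) (hL : ZLattice.covolume L = 1)
    (hV : finrank ℝ V = 2 * k) (hk : 4 ∣ k) : ModularForm 𝒮ℒ k where
  toFun τ := thetaSeries L τ
  slash_action_eq' A hA := by
    obtain ⟨A, rfl⟩ := hA
    exact SlashInvariantForm.slash_action_generators_SL2Z
      (thetaSeries_slash_S heven.1 hL hV hk) (thetaSeries_slash_T heven k) A
  holo' := mdifferentiable_iff.2 <| (differentiableOn_thetaSeries L).congr fun τ hτ => by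
    simp [ofComplex_apply_of_im_pos hτ]
  bdd_at_cusps' hc := by
    rw [Subgroup.IsArithmetic.isCusp_iff_isCusp_SL2Z] at hc
    rw [OnePoint.isBoundedAt_iff_forall_SL2Z hc]
    intro γ _
    rw [SlashInvariantForm.slash_action_generators_SL2Z
      (thetaSeries_slash_S heven.1 hL hV hk) (thetaSeries_slash_T heven k)]
    exact isBoundedAtImInfty_thetaSeries L

theorem qExpansion_thetaModularForm_coeff (heven : IsEvenLat L) (hL : ZLattice.covolume L = 1)
    (hV : finrank ℝ V = 2 * k) (hk : 4 ∣ k) (m : ℕ) :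
    (qExpansion 1 (thetaModularForm heven hL hV hk)).coeff m = (shell L (2 * m)).ncard :=
  (ModularFormClass.qExpansion_coeff_unique (c := fun m => ((shell L (2 * m)).ncard : ℂ))
    one_pos one_mem_strictPeriods_SL (fun τ => hasSum_qParam_thetaSeries heven τ.2) m).symm

theorem ncard_shell_four (hV : finrank ℝ V = 24) (heven : IsEvenLat L)
    (hL : ZLattice.covolume L = 1) (hmin : ∀ v ∈ L, v ≠ 0 → 4 ≤ ⟪v, v⟫) :
    (shell L 4).ncard = 196560 := by
  let θ : ModularForm 𝒮ℒ 12 := thetaModularForm heven hL (by rw [hV]; rfl) ⟨3, rfl⟩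
  have hcoeff (m : ℕ) : (qExpansion 1 θ).coeff m = (shell L (2 * m)).ncard :=
    qExpansion_thetaModularForm_coeff heven hL _ _ m
  have hzero : shell L (2 * (0 : ℕ)) = {0} := by
    ext v
    simp +contextual [shell]
  have htwo : shell L (2 * (1 : ℕ)) = ∅ := by
    refine Set.eq_empty_of_forall_notMem fun v ⟨hv, hv2⟩ => ?_
    have h0 : v ≠ 0 := fun h => by simp [h] at hv2
    have hv4 := hmin v hv h0
    rw [hv2] at hv4
    norm_num at hv4
  have h0 : (qExpansion 1 θ).coeff 0 = 1 := by rw [hcoeff, hzero, Set.ncard_singleton, Nat.cast_one]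
  have h1 : (qExpansion 1 θ).coeff 1 = 0 := by rw [hcoeff, htwo, Set.ncard_empty, Nat.cast_zero]
  have h2 := qExpansion_coeff_two_of_coeff_zero_one h0 h1
  rw [hcoeff] at h2
  norm_num at h2
  exact_mod_cast h2

end ThetaModular

section Index

variable {L : Submodule ℤ V} [FiniteDimensional ℝ V] [DiscreteTopology L] [IsZLattice ℝ L]

theorem relIndex_zsmul (n : ℕ) :
    ((n : ℤ) • L).toAddSubgroup.relIndex L.toAddSubgroup = n ^ finrank ℝ V := by
  have : Free ℤ L.toAddSubgroup.toIntSubmodule := ZLattice.module_free ℝ L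
  have : Module.Finite ℤ L.toAddSubgroup.toIntSubmodule := ZLattice.module_finite ℝ L
  have hmap : ((n : ℤ) • L).toAddSubgroup = L.toAddSubgroup.map (nsmulAddMonoidHom n) := by
    ext x
    exact (Submodule.mem_smul_pointwise_iff_exists _ _ _).trans (by simp)
  rw [hmap, AddSubgroup.relIndex_map_nsmul, ← ZLattice.rank ℝ L]
  rfl

variable [MeasurableSpace V] [BorelSpace V]

theorem IsUnimodularLat.covolume_eq_one (hL : IsUnimodularLat L) : ZLattice.covolume L = 1 := by
  obtain ⟨n, b, hb⟩ := hL
  have hsq : ZLattice.covolume L ^ 2 = 1 := (covolume_sq_eq_det_gram b).trans hb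
  exact (pow_eq_one_iff_of_nonneg (ZLattice.covolume_pos L).le two_ne_zero).1 hsq

theorem SqrtTwoEvenUnimod.two_pow_mul_covolume_sq (hL : SqrtTwoEvenUnimod L) :
    2 ^ finrank ℝ V * ZLattice.covolume L ^ 2 = 1 := by
  obtain ⟨-, -, n, b, hb⟩ := hL
  rw [covolume_sq_eq_det_gram b, finrank_eq_card_basis (b.ofZLatticeBasis ℝ L),
    ← Matrix.det_smul, ← hb]
  rfl

theorem SqrtTwoEvenUnimod.relIndex_two_smul_sq (hL : SqrtTwoEvenUnimod L) {N : Submodule ℤ V}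
    [DiscreteTopology N] [IsZLattice ℝ N] (hN : IsUnimodularLat N) (hNL : N ≤ L)
    (hLN : (2 : ℤ) • L ≤ N) :
    ((2 : ℤ) • L).toAddSubgroup.relIndex N.toAddSubgroup ^ 2 = 2 ^ finrank ℝ V := by
  let c := ZLattice.covolume L
  let i := N.toAddSubgroup.relIndex L.toAddSubgroup
  have hindex : c * i = 1 := by
    rw [← ZLattice.covolume_div_covolume_eq_relIndex' N L hNL, hN.covolume_eq_one]
    exact mul_one_div_cancel (ZLattice.covolume_ne_zero L)
  have hi : i ^ 2 = 2 ^ finrank ℝ V := by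
    rify
    calc (i : ℝ) ^ 2 = 2 ^ finrank ℝ V * c ^ 2 * i ^ 2 := by
          rw [hL.two_pow_mul_covolume_sq, one_mul]
      _ = 2 ^ finrank ℝ V := by rw [mul_assoc, ← mul_pow, hindex, one_pow, mul_one]
  have htower := (AddSubgroup.relIndex_mul_relIndex _ _ _ (Submodule.toAddSubgroup_mono hLN)
    (Submodule.toAddSubgroup_mono hNL)).trans (relIndex_zsmul 2)
  refine Nat.eq_of_mul_eq_mul_right (Nat.two_pow_pos (finrank ℝ V)) ?_
  calc ((2 : ℤ) • L).toAddSubgroup.relIndex N.toAddSubgroup ^ 2 * 2 ^ finrank ℝ V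
      = ((2 : ℤ) • L).toAddSubgroup.relIndex N.toAddSubgroup ^ 2 * i ^ 2 := by rw [hi]
    _ = 2 ^ finrank ℝ V * 2 ^ finrank ℝ V := by rw [← mul_pow, htower, sq]

end Index

section Pigeonhole

theorem exists_lt_ncard_inter_preimage {α β : Type*} {S : Set α} {T : Set β} {f : α → β} {n : ℕ}
    (hT : T.Finite) (hmaps : Set.MapsTo f S T) (hcard : n * T.ncard < S.ncard) :
    ∃ y, n < (S ∩ f ⁻¹' {y}).ncard := by
  classical
  have hS : S.Finite := Set.finite_of_ncard_pos (by lia)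
  rw [Set.ncard_eq_toFinset_card S hS, Set.ncard_eq_toFinset_card T hT, mul_comm] at hcard
  obtain ⟨y, -, hy⟩ := Finset.exists_lt_card_fiber_of_mul_lt_card_of_maps_to
    (fun a ha => hT.mem_toFinset.2 (hmaps (hS.mem_toFinset.1 ha))) hcard
  refine ⟨y, hy.trans_eq ?_⟩
  rw [← Set.ncard_coe_finset]
  congr 1
  ext
  simp

theorem inner_eq_zero_of_sub_mem {D : Submodule ℤ V} {r : ℝ}
    (hD : ∀ v ∈ D, v ≠ 0 → 2 * r ≤ ⟪v, v⟫) {a b : V} (ha : ⟪a, a⟫ = r) (hb : ⟪b, b⟫ = r)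
    (hsub : a - b ∈ D) (htwo : (2 : ℤ) • b ∈ D) (hne : a ≠ b) (hneg : a ≠ -b) : ⟪a, b⟫ = 0 := by
  have hadd : a + b ∈ D := by
    convert D.add_mem hsub htwo using 1
    module
  have hsub_ge := hD _ hsub (sub_ne_zero.2 hne)
  have hadd_ge := hD _ hadd fun h => hneg (eq_neg_of_add_eq_zero_left h)
  rw [real_inner_sub_sub_self] at hsub_ge
  rw [real_inner_add_add_self] at hadd_ge
  linarith

variable [FiniteDimensional ℝ V]

theorem finite_and_ncard_le_finrank_of_inner_eq_zero {S : Set V} (hS : 0 ∉ S)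
    (horth : S.Pairwise fun u v => ⟪u, v⟫ = 0) : S.Finite ∧ S.ncard ≤ finrank ℝ V := by
  have hli : LinearIndependent ℝ ((↑) : S → V) :=
    linearIndependent_of_ne_zero_of_inner_eq_zero (fun v => ne_of_mem_of_not_mem v.2 hS)
      fun u v huv => horth u.2 v.2 (Subtype.coe_ne_coe.2 huv)
  have := hli.setFinite.fintype
  rw [Set.ncard_eq_toFinset_card', Set.toFinset_card]
  exact ⟨Set.toFinite _, hli.fintype_card_le_finrank⟩

theorem ncard_le_two_mul_finrank_of_inner_eq_zero {S : Set V} (hS : 0 ∉ S)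
    (horth : S.Pairwise fun u v => u ≠ -v → ⟪u, v⟫ = 0) : S.ncard ≤ 2 * finrank ℝ V := by
  obtain ⟨T, hTS, hT⟩ := Set.exists_subset_bijOn S fun v => s(v, -v)
  obtain ⟨hTfin, hTcard⟩ := finite_and_ncard_le_finrank_of_inner_eq_zero (fun h => hS (hTS h))
    fun u hu v hv huv => horth (hTS hu) (hTS hv) huv fun h =>
      huv <| hT.injOn hu hv (by simp [h, Sym2.eq_swap])
  have hST : S ⊆ T ∪ -T := fun u hu => by
    obtain ⟨v, hv, huv⟩ := hT.surjOn (Set.mem_image_of_mem _ hu)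
    rcases Sym2.eq_iff.1 huv with ⟨rfl, -⟩ | ⟨-, rfl⟩
    · exact Or.inl hv
    · exact Or.inr (by simpa using hv)
  calc S.ncard ≤ (T ∪ -T).ncard := Set.ncard_le_ncard hST (hTfin.union hTfin.neg)
    _ ≤ T.ncard + (-T).ncard := Set.ncard_union_le _ _
    _ ≤ 2 * finrank ℝ V := by rw [Set.ncard_neg]; lia

theorem exists_mem_shell_sub_mem {N D : Submodule ℤ V} {r : ℝ} (hr : 0 < r)
    (hD : ∀ v ∈ D, v ≠ 0 → 2 * r ≤ ⟪v, v⟫) (htwo : (2 : ℤ) • N ≤ D) {m : ℕ}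
    (hindex : D.toAddSubgroup.relIndex N.toAddSubgroup = m + 2)
    (hcard : 2 * finrank ℝ V * m < (shell N r).ncard) {s : V} (hs : s ∈ N) (hsD : s ∉ D) :
    ∃ w ∈ shell N r, w - s ∈ D := by
  by_contra! hno
  let f := QuotientAddGroup.mk' D.toAddSubgroup
  have hf {u v : V} : f u = f v ↔ u - v ∈ D := QuotientAddGroup.eq_iff_sub_mem
  have hcardN : (f '' N).ncard = m + 2 := by
    have hker := AddSubgroup.relIndex_ker N.toAddSubgroup f
    rw [QuotientAddGroup.ker_mk', hindex] at hker
    exact hker.symm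
  have hfinN : (f '' N).Finite := Set.finite_of_ncard_ne_zero (by lia)
  have hcardT : (f '' N \ {f 0, f s}).ncard = m := by
    rw [Set.ncard_sdiff (Set.pair_subset (Set.mem_image_of_mem f N.zero_mem)
      (Set.mem_image_of_mem f hs)), Set.ncard_pair, hcardN, Nat.add_sub_cancel]
    rwa [Ne, eq_comm, hf, sub_zero]
  have hmaps : Set.MapsTo f (shell N r) (f '' N \ {f 0, f s}) := by
    rintro v ⟨hvN, hvr⟩
    refine ⟨Set.mem_image_of_mem f hvN, ?_⟩
    rintro (hv | hv)
    · have := hD v (by simpa using hf.1 hv) (by rintro rfl; simp [hr.ne] at hvr)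
      linarith
    · exact hno v ⟨hvN, hvr⟩ (hf.1 hv)
  obtain ⟨q, hq⟩ := exists_lt_ncard_inter_preimage hfinN.sdiff hmaps (hcardT ▸ hcard)
  refine hq.not_ge (ncard_le_two_mul_finrank_of_inner_eq_zero (by simp [shell, hr.ne]) ?_)
  rintro u ⟨⟨-, hur⟩, hu⟩ v ⟨⟨hvN, hvr⟩, hv⟩ huv huv'
  exact inner_eq_zero_of_sub_mem hD hur hvr (hf.1 (hu.trans hv.symm))
    (htwo (Submodule.smul_mem_pointwise_smul _ _ _ hvN)) huv huv'

end Pigeonhole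

section MinNorm

variable {L : Submodule ℤ V}

theorem bddBelow_norms (L : Submodule ℤ V) : BddBelow {r : ℝ | ∃ x ∈ L, x ≠ 0 ∧ ⟪x, x⟫ = r} :=
  ⟨0, by rintro r ⟨x, -, -, rfl⟩; exact real_inner_self_nonneg⟩

theorem minNorm_le {x : V} (hx : x ∈ L) (hx0 : x ≠ 0) : minNorm L ≤ ⟪x, x⟫ :=
  csInf_le (bddBelow_norms L) ⟨x, hx, hx0, rfl⟩

theorem minNorm_eq_of_inner_eq {v : V} {r : ℝ} (hv : v ∈ L) (hvr : ⟪v, v⟫ = r) (hr : r ≠ 0)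
    (hmin : ∀ x ∈ L, x ≠ 0 → r ≤ ⟪x, x⟫) : minNorm L = r := by
  have hv0 : v ≠ 0 := by
    rintro rfl
    exact hr (hvr.symm.trans (inner_zero_left 0))
  refine IsLeast.csInf_eq ⟨⟨v, hv, hv0, hvr⟩, ?_⟩
  rintro s ⟨x, hx, hx0, rfl⟩
  exact hmin x hx hx0

theorem exists_inner_eq_minNorm (hL : ∀ x ∈ L, ∃ n : ℤ, ⟪x, x⟫ = n) (hmin : minNorm L ≠ 0) :
    ∃ x ∈ L, x ≠ 0 ∧ ⟪x, x⟫ = minNorm L := by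
  set S := {r : ℝ | ∃ x ∈ L, x ≠ 0 ∧ ⟪x, x⟫ = r}
  have hne : S.Nonempty := Set.nonempty_iff_ne_empty.2 fun hS =>
    hmin ((congrArg sInf hS).trans Real.sInf_empty)
  have hint : S ⊆ Set.range ((↑) : ℤ → ℝ) := by
    rintro r ⟨x, hx, -, rfl⟩
    exact (hL x hx).imp fun n hn => hn.symm
  have hclosed : IsClosed S := by
    rw [← Set.image_preimage_eq_of_subset hint]
    exact Int.isClosedEmbedding_coe_real.isClosedMap _ (isClosed_discrete _)
  exact hclosed.csInf_mem hne (bddBelow_norms L)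

end MinNorm

section Polarization

variable {Υ M N : Submodule ℤ V}

/-- The part of the Leech polarization setup on which the determination of the minimum norm of
`L(M,N,3)` rests: `√2·Υ` is even unimodular with minimum norm 4 in dimension 24, and `M` and `N`
are even sublattices of `Υ` with minimum norm 4 and `M ∩ N = 2Υ`, of which `N` is a Leech
lattice. -/
structure IsLeechPair (Υ M N : Submodule ℤ V) : Prop where
  finrank_eq : finrank ℝ V = 24
  sqrtTwoEvenUnimod : SqrtTwoEvenUnimod Υ
  four_le_two_mul : ∀ v ∈ Υ, v ≠ 0 → 4 ≤ 2 * ⟪v, v⟫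
  left_le : M ≤ Υ
  right_le : N ≤ Υ
  inf_eq : M ⊓ N = (2 : ℤ) • Υ
  isEvenLat_left : IsEvenLat M
  minNorm_left : minNorm M = 4
  span_right : Submodule.span ℝ (N : Set V) = ⊤
  isEvenLat_right : IsEvenLat N
  isUnimodularLat_right : IsUnimodularLat N
  minNorm_right : minNorm N = 4

theorem LeechSetup.isLeechPair (h : LeechSetup Υ M N) : IsLeechPair Υ M N := by
  obtain ⟨hV, -, hΥ, hminΥ, ⟨hMΥ, hNΥ, -, -, -, hMN⟩, -, hM, -, hminM, hN, hevenN, huniN,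
    hminN⟩ := h
  exact ⟨hV, hΥ, hminΥ, hMΥ, hNΥ, hMN, hM, hminM, hN.2, hevenN, huniN, hminN⟩

namespace IsLeechPair

theorem two_smul_mem (h : IsLeechPair Υ M N) {v : V} (hv : v ∈ Υ) : (2 : ℤ) • v ∈ M ⊓ N :=
  h.inf_eq ▸ Submodule.smul_mem_pointwise_smul v _ Υ hv

theorem four_le_left (h : IsLeechPair Υ M N) {v : V} (hv : v ∈ M) (hv0 : v ≠ 0) : 4 ≤ ⟪v, v⟫ :=
  h.minNorm_left ▸ minNorm_le hv hv0

theorem four_le_right (h : IsLeechPair Υ M N) {v : V} (hv : v ∈ N) (hv0 : v ≠ 0) : 4 ≤ ⟪v, v⟫ :=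
  h.minNorm_right ▸ minNorm_le hv hv0

theorem exists_eq_two_smul (h : IsLeechPair Υ M N) {v : V} (hv : v ∈ M ⊓ N) :
    ∃ u ∈ Υ, v = (2 : ℤ) • u ∧ ⟪v, v⟫ = 4 * ⟪u, u⟫ := by
  rw [h.inf_eq] at hv
  obtain ⟨u, hu, rfl⟩ := (Submodule.mem_smul_pointwise_iff_exists _ _ _).1 hv
  refine ⟨u, hu, rfl, ?_⟩
  rw [two_smul, real_inner_add_add_self]
  ring

theorem exists_inner_self_eq_four_mul (h : IsLeechPair Υ M N) {v : V} (hv : v ∈ M ⊓ N) :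
    ∃ n : ℤ, ⟪v, v⟫ = 4 * n := by
  obtain ⟨u, hu, -, huv⟩ := h.exists_eq_two_smul hv
  exact (h.sqrtTwoEvenUnimod.1 u hu).imp fun n hn => by rw [huv, hn]

theorem eight_le (h : IsLeechPair Υ M N) {v : V} (hv : v ∈ M ⊓ N) (hv0 : v ≠ 0) :
    8 ≤ ⟪v, v⟫ := by
  obtain ⟨u, hu, rfl, huv⟩ := h.exists_eq_two_smul hv
  have hmin := h.four_le_two_mul u hu (by rintro rfl; exact hv0 (smul_zero _))
  linarith

theorem exists_mem_shell_four_sub_mem (h : IsLeechPair Υ M N) {s : V} (hs : s ∈ N) (hsM : s ∉ M) :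
    ∃ w ∈ shell N 4, w - s ∈ M ⊓ N := by
  have : FiniteDimensional ℝ V := finite_of_finrank_pos (by rw [h.finrank_eq]; norm_num)
  let _ : MeasurableSpace V := borel V
  have : BorelSpace V := ⟨rfl⟩
  have : DiscreteTopology Υ := discreteTopology_of_norm_int h.sqrtTwoEvenUnimod.1
  have : DiscreteTopology N :=
    discreteTopology_of_norm_int fun x hx => h.isEvenLat_right.1 x hx x hx
  have : IsZLattice ℝ N := ⟨h.span_right⟩
  have : IsZLattice ℝ Υ := ⟨top_unique (h.span_right ▸ Submodule.span_mono h.right_le)⟩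
  have hindex : (M ⊓ N).toAddSubgroup.relIndex N.toAddSubgroup = 4094 + 2 := by
    refine Nat.pow_left_injective two_ne_zero ?_
    have hsq := h.sqrtTwoEvenUnimod.relIndex_two_smul_sq h.isUnimodularLat_right h.right_le
      (h.inf_eq ▸ inf_le_right)
    rw [← h.inf_eq, h.finrank_eq] at hsq
    exact hsq.trans (by norm_num)
  refine exists_mem_shell_sub_mem four_pos (fun v hv hv0 => ?_) ?_ hindex ?_ hs fun hsD => hsM hsD.1
  · exact (h.eight_le hv hv0).trans' (by norm_num)
  · rw [h.inf_eq]
    exact Submodule.map_mono h.right_le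
  · rw [ncard_shell_four h.finrank_eq h.isEvenLat_right h.isUnimodularLat_right.covolume_eq_one
      fun v hv hv0 => h.four_le_right hv hv0, h.finrank_eq]
    norm_num

end IsLeechPair

end Polarization

section Offenders

variable {Υ M N : Submodule ℤ V} {w x y z : V}

omit [InnerProductSpace ℝ V] in
theorem Admissible.rotate (h : Admissible M N w x y z) : Admissible M N w y z x := by
  obtain ⟨hw, hx, hy, hz, hxyz⟩ := h
  exact ⟨hw, hy, hz, hx, by rwa [add_comm, ← add_assoc]⟩

theorem Offender.rotate (h : Offender M N w x y z) : Offender M N w y z x :=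
  ⟨h.1.rotate, h.2.2.1, h.2.2.2, h.2.1⟩

theorem Admissible.sum_add_two_smul_mem (h : Admissible M N w x y z) (hΥ : IsLeechPair Υ M N) :
    x + y + z + (2 : ℤ) • w ∈ M ⊓ N :=
  (M ⊓ N).add_mem h.2.2.2.2 (hΥ.two_smul_mem (hΥ.right_le h.1))

theorem Offender.left_notMem (h : Offender M N w x y z) (hΥ : IsLeechPair Υ M N) : w ∉ M := by
  intro hw
  have hmin := hΥ.four_le_left (M.add_mem hw h.1.2.1) fun h0 => by simpa [h0] using h.2.1
  linarith [h.2.1]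

theorem Offender.add_notMem_right (h : Offender M N w x y z) (hΥ : IsLeechPair Υ M N) :
    w + z ∉ N := by
  intro hz
  have hmin := hΥ.four_le_right hz fun h0 => by simpa [h0] using h.2.2.2
  linarith [h.2.2.2]

theorem Offender.exists_left_norm_eq_four (h : Offender M N w x y z) (hΥ : IsLeechPair Υ M N) :
    ∃ w x y z : V, Offender M N w x y z ∧ ⟪w, w⟫ = 4 := by
  obtain ⟨w', ⟨hw'N, hw'⟩, hd⟩ := hΥ.exists_mem_shell_four_sub_mem h.1.1 (h.left_notMem hΥ)
  obtain ⟨⟨-, hx, hy, hz, hxyz⟩, hwx, hwy, hwz⟩ := h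
  have htranslate (u : V) : w' + (u - (w' - w)) = w + u := by abel
  refine ⟨w', x - (w' - w), y - (w' - w), z - (w' - w), ⟨⟨hw'N, M.sub_mem hx hd.1,
    M.sub_mem hy hd.1, M.sub_mem hz hd.1, ?_⟩, ?_, ?_, ?_⟩, hw'⟩
  · convert (M ⊓ N).sub_mem hxyz ((M ⊓ N).smul_mem (3 : ℤ) hd) using 1
    module
  all_goals rwa [htranslate]

theorem Offender.flip (h : Offender M N w x y z) (hΥ : IsLeechPair Υ M N) :
    Offender M N w x y (-z - (2 : ℤ) • w) := by
  obtain ⟨⟨hw, hx, hy, hz, hxyz⟩, hwx, hwy, hwz⟩ := h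
  have h2w := hΥ.two_smul_mem (hΥ.right_le hw)
  have h2z := hΥ.two_smul_mem (hΥ.left_le hz)
  refine ⟨⟨hw, hx, hy, M.sub_mem (M.neg_mem hz) h2w.1, ?_⟩, hwx, hwy, ?_⟩
  · convert (M ⊓ N).sub_mem ((M ⊓ N).sub_mem hxyz h2z) h2w using 1
    module
  · rwa [show w + (-z - (2 : ℤ) • w) = -(w + z) by module, inner_neg_neg]

theorem Offender.norm_last_eq_or_eight_le (h : Offender M N w x y z) (hΥ : IsLeechPair Υ M N) :
    ⟪z, z⟫ = 4 ∨ ⟪z, z⟫ = 6 ∨ 8 ≤ ⟪z, z⟫ := by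
  have hzM : z ∈ M := h.1.2.2.2.1
  have hz0 : z ≠ 0 := by
    rintro rfl
    exact h.add_notMem_right hΥ (by simpa using h.1.1)
  have hmin := hΥ.four_le_left hzM hz0
  obtain ⟨n, hn⟩ := hΥ.isEvenLat_left.2 z hzM
  have hn2 : 2 ≤ n := by
    rify
    linarith
  rcases (by lia : n = 2 ∨ n = 3 ∨ 4 ≤ n) with rfl | rfl | hn4
  · exact .inl (by rw [hn]; norm_num)
  · exact .inr (.inl (by rw [hn]; norm_num))
  · rify at hn4
    exact .inr (.inr (by linarith))

theorem Offender.norm_flip_add_norm (h : Offender M N w x y z) (hw : ⟪w, w⟫ = 4) :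
    ⟪-z - (2 : ℤ) • w, -z - (2 : ℤ) • w⟫ + ⟪z, z⟫ = 12 := by
  have hwz := h.2.2.2
  rw [← neg_add', inner_neg_neg]
  simp only [two_smul, inner_add_left, inner_add_right, real_inner_comm w z] at hwz ⊢
  linarith

theorem Offender.exists_last_norm_le_six (h : Offender M N w x y z) (hΥ : IsLeechPair Υ M N)
    (hw : ⟪w, w⟫ = 4) : ∃ z', Offender M N w x y z' ∧ (⟪z', z'⟫ = 4 ∨ ⟪z', z'⟫ = 6) := by
  rcases h.norm_last_eq_or_eight_le hΥ with hz | hz | hz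
  · exact ⟨z, h, .inl hz⟩
  · exact ⟨z, h, .inr hz⟩
  · refine ⟨_, h.flip hΥ, ?_⟩
    have hsum := h.norm_flip_add_norm hw
    rcases (h.flip hΥ).norm_last_eq_or_eight_le hΥ with hz' | hz' | hz'
    · exact .inl hz'
    · exact .inr hz'
    · linarith

theorem Offender.inner_eq_zero (h : Offender M N w x y z) (hΥ : IsLeechPair Υ M N) :
    ⟪w + x, w + y⟫ = 0 := by
  have hzN := h.add_notMem_right hΥ
  have hsum := (h.1.sum_add_two_smul_mem hΥ).2
  obtain ⟨⟨hw, hx, hy, -⟩, hwx, hwy, -⟩ := h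
  have hyΥ : w + y ∈ Υ := Υ.add_mem (hΥ.right_le hw) (hΥ.left_le hy)
  refine inner_eq_zero_of_sub_mem (D := M) (fun v hv hv0 => ?_) hwx hwy ?_
    (hΥ.two_smul_mem hyΥ).1 (fun hxy => hzN ?_) fun hxy => hzN ?_
  · linarith [hΥ.four_le_left hv hv0]
  · rw [add_sub_add_left_eq_sub]
    exact M.sub_mem hx hy
  · convert N.sub_mem (N.add_mem hsum hw) (hΥ.two_smul_mem hyΥ).2 using 1
    rw [add_left_cancel hxy]
    module
  · convert N.add_mem hsum hw using 1
    rw [eq_sub_of_add_eq' hxy]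
    module

theorem Offender.norm_sum_add_two_smul (h : Offender M N w x y z) (hΥ : IsLeechPair Υ M N)
    (hw : ⟪w, w⟫ = 4) :
    ⟪x + y + z + (2 : ℤ) • w, x + y + z + (2 : ℤ) • w⟫ = ⟪x, x⟫ + ⟪y, y⟫ + ⟪z, z⟫ - 8 := by
  have hxy := h.inner_eq_zero hΥ
  have hyz := h.rotate.inner_eq_zero hΥ
  have hzx := h.rotate.rotate.inner_eq_zero hΥ
  obtain ⟨-, hx, hy, hz⟩ := h
  simp only [two_smul, inner_add_left, inner_add_right, real_inner_comm x w, real_inner_comm y w,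
    real_inner_comm z w, real_inner_comm y x, real_inner_comm z y, real_inner_comm z x] at *
  linarith

theorem Offender.norm_sum_eq_sixteen (h : Offender M N w x y z) (hΥ : IsLeechPair Υ M N)
    (hw : ⟪w, w⟫ = 4) (hlower : 12 ≤ ⟪x, x⟫ + ⟪y, y⟫ + ⟪z, z⟫)
    (hupper : ⟪x, x⟫ + ⟪y, y⟫ + ⟪z, z⟫ ≤ 18) : ⟪x, x⟫ + ⟪y, y⟫ + ⟪z, z⟫ = 16 := by
  have hmem := h.1.sum_add_two_smul_mem hΥ
  have hnorm := h.norm_sum_add_two_smul hΥ hw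
  have hne : x + y + z + (2 : ℤ) • w ≠ 0 := fun h0 => by
    rw [h0, inner_zero_left] at hnorm
    linarith
  have hmin := hΥ.eight_le hmem hne
  obtain ⟨n, hn⟩ := hΥ.exists_inner_self_eq_four_mul hmem
  obtain rfl : n = 2 := by
    have hle : 2 ≤ n := by
      rify
      linarith
    have hlt : n < 3 := by
      rify
      linarith
    lia
  push_cast at hn
  linarith

theorem Offender.superOffender (h : Offender M N w x y z) (hΥ : IsLeechPair Υ M N)
    (hw : ⟪w, w⟫ = 4) (hx : ⟪x, x⟫ = 4 ∨ ⟪x, x⟫ = 6) (hy : ⟪y, y⟫ = 4 ∨ ⟪y, y⟫ = 6)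
    (hz : ⟪z, z⟫ = 4 ∨ ⟪z, z⟫ = 6) : SuperOffender M N w x y z := by
  have hsum := h.norm_sum_eq_sixteen hΥ hw (by grind) (by grind)
  refine ⟨h, hw, ?_⟩
  rcases hx with hx | hx <;> rcases hy with hy | hy <;> rcases hz with hz | hz <;>
    rw [hx, hy, hz] at hsum ⊢ <;> norm_num at hsum
  · rw [Multiset.insert_eq_cons, Multiset.insert_eq_cons, Multiset.cons_swap,
      ← Multiset.insert_eq_cons 4, Multiset.pair_comm]
    rfl
  · rw [Multiset.pair_comm]

theorem Offender.exists_superOffender (h : Offender M N w x y z) (hΥ : IsLeechPair Υ M N) :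
    ∃ w x y z : V, SuperOffender M N w x y z := by
  obtain ⟨w, x, y, z, h, hw⟩ := h.exists_left_norm_eq_four hΥ
  obtain ⟨z, h, hz⟩ := h.exists_last_norm_le_six hΥ hw
  obtain ⟨x, h, hx⟩ := h.rotate.exists_last_norm_le_six hΥ hw
  obtain ⟨y, h, hy⟩ := h.rotate.exists_last_norm_le_six hΥ hw
  exact ⟨w, z, x, y, h.superOffender hΥ hw hz hx hy⟩

end Offenders

section MinNormLMN

variable {Υ M N : Submodule ℤ V} {w x y z : V}

omit [InnerProductSpace ℝ V] in
theorem mem_LMN_three {v : PiLp 2 fun _ : Fin 3 => V} :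
    v ∈ LMN M N 3 ↔ ∃ w x y z, Admissible M N w x y z ∧ v = !₂[w + x, w + y, w + z] := by
  refine Submodule.mem_sup.trans ⟨?_, ?_⟩
  · rintro ⟨p, ⟨hp, hsum⟩, q, ⟨w, hw, hq⟩, rfl⟩
    rw [Fin.sum_univ_three] at hsum
    refine ⟨w, p 0, p 1, p 2, ⟨hw, hp 0, hp 1, hp 2, hsum⟩, ?_⟩
    ext i
    fin_cases i <;> simp [hq, add_comm]
  · rintro ⟨w, x, y, z, ⟨hw, hx, hy, hz, hsum⟩, rfl⟩
    refine ⟨!₂[x, y, z], ⟨?_, ?_⟩, !₂[w, w, w], ⟨w, hw, ?_⟩, ?_⟩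
    · intro i
      fin_cases i <;> assumption
    · rwa [Fin.sum_univ_three]
    · intro i
      fin_cases i <;> rfl
    · ext i
      fin_cases i <;> simp [add_comm]

theorem inner_self_toLp_three (a b c : V) :
    ⟪!₂[a, b, c], !₂[a, b, c]⟫ = ⟪a, a⟫ + ⟪b, b⟫ + ⟪c, c⟫ := by
  rw [PiLp.inner_apply, Fin.sum_univ_three]
  rfl

omit [InnerProductSpace ℝ V] in
theorem toLp_three_eq_zero {a b c : V} : !₂[a, b, c] = 0 ↔ a = 0 ∧ b = 0 ∧ c = 0 := by
  simp [WithLp.toLp_eq_zero]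

theorem IsLeechPair.eight_le_add (hΥ : IsLeechPair Υ M N) (hx : x ∈ M) (hy : y ∈ M)
    (hxy : x + y ∈ M ⊓ N) (hne : ¬(x = 0 ∧ y = 0)) : 8 ≤ ⟪x, x⟫ + ⟪y, y⟫ := by
  by_cases hx0 : x = 0
  · subst hx0
    rw [zero_add] at hxy
    simpa using hΥ.eight_le hxy fun hy0 => hne ⟨rfl, hy0⟩
  by_cases hy0 : y = 0
  · subst hy0
    rw [add_zero] at hxy
    simpa using hΥ.eight_le hxy hx0
  linarith [hΥ.four_le_left hx hx0, hΥ.four_le_left hy hy0]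

theorem Admissible.eight_le_of_add_eq_zero (h : Admissible M N w x y z) (hΥ : IsLeechPair Υ M N)
    (hx0 : w + x = 0) (hne : ¬(w + y = 0 ∧ w + z = 0)) :
    8 ≤ ⟪w + y, w + y⟫ + ⟪w + z, w + z⟫ := by
  obtain ⟨hw, hx, hy, hz, hxyz⟩ := h
  have hwM : w ∈ M := by
    rw [eq_neg_of_add_eq_zero_left hx0]
    exact M.neg_mem hx
  refine hΥ.eight_le_add (M.add_mem hwM hy) (M.add_mem hwM hz) ?_ hne
  convert (M ⊓ N).add_mem hxyz ((M ⊓ N).smul_mem (3 : ℤ) ⟨hwM, hw⟩) using 1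
  rw [eq_neg_of_add_eq_zero_left hx0]
  module

theorem Admissible.exists_norm_eq_two_mul (h : Admissible M N w x y z) (hΥ : IsLeechPair Υ M N) :
    ∃ n : ℤ, ⟪w + x, w + x⟫ + ⟪w + y, w + y⟫ + ⟪w + z, w + z⟫ = 2 * n := by
  obtain ⟨hw, hx, hy, hz, hxyz⟩ := h
  obtain ⟨kw, hkw⟩ := hΥ.isEvenLat_right.2 w hw
  obtain ⟨kx, hkx⟩ := hΥ.isEvenLat_left.2 x hx
  obtain ⟨ky, hky⟩ := hΥ.isEvenLat_left.2 y hy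
  obtain ⟨kz, hkz⟩ := hΥ.isEvenLat_left.2 z hz
  obtain ⟨k, hk⟩ := hΥ.isEvenLat_right.1 w hw (x + y + z) hxyz.2
  refine ⟨3 * kw + kx + ky + kz + k, ?_⟩
  rw [inner_add_right, inner_add_right] at hk
  simp only [real_inner_add_add_self]
  push_cast
  linarith

theorem Admissible.eight_le_or_offender (h : Admissible M N w x y z) (hΥ : IsLeechPair Υ M N)
    (hne : ¬(w + x = 0 ∧ w + y = 0 ∧ w + z = 0)) :
    8 ≤ ⟪w + x, w + x⟫ + ⟪w + y, w + y⟫ + ⟪w + z, w + z⟫ ∨ Offender M N w x y z := by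
  by_cases hx0 : w + x = 0
  · have hsum := h.eight_le_of_add_eq_zero hΥ hx0 (by tauto)
    exact .inl (by linarith [real_inner_self_nonneg (x := w + x)])
  by_cases hy0 : w + y = 0
  · have hsum := h.rotate.eight_le_of_add_eq_zero hΥ hy0 (by tauto)
    exact .inl (by linarith [real_inner_self_nonneg (x := w + y)])
  by_cases hz0 : w + z = 0
  · have hsum := h.rotate.rotate.eight_le_of_add_eq_zero hΥ hz0 (by tauto)
    exact .inl (by linarith [real_inner_self_nonneg (x := w + z)])
  obtain ⟨n, hn⟩ := h.exists_norm_eq_two_mul hΥ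
  have hmin {u : V} (hu : u ∈ M) (hu0 : w + u ≠ 0) : 2 ≤ ⟪w + u, w + u⟫ := by
    linarith [hΥ.four_le_two_mul _ (Υ.add_mem (hΥ.right_le h.1) (hΥ.left_le hu)) hu0]
  have hx := hmin h.2.1 hx0
  have hy := hmin h.2.2.1 hy0
  have hz := hmin h.2.2.2.1 hz0
  rcases le_or_gt 4 n with h4 | h4
  · rify at h4
    exact .inl (by linarith)
  · have h3 : (n : ℝ) ≤ 3 := mod_cast Int.le_of_lt_add_one h4
    exact .inr ⟨h, by linarith, by linarith, by linarith⟩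

theorem Offender.toLp_mem_LMN (h : Offender M N w x y z) :
    !₂[w + x, w + y, w + z] ∈ LMN M N 3 :=
  mem_LMN_three.2 ⟨w, x, y, z, h.1, rfl⟩

theorem Offender.inner_self_toLp (h : Offender M N w x y z) :
    ⟪!₂[w + x, w + y, w + z], !₂[w + x, w + y, w + z]⟫ = 6 := by
  rw [inner_self_toLp_three, h.2.1, h.2.2.1, h.2.2.2]
  norm_num

theorem IsLeechPair.eight_le_or_exists_offender (hΥ : IsLeechPair Υ M N)
    {v : PiLp 2 fun _ : Fin 3 => V} (hv : v ∈ LMN M N 3) (hv0 : v ≠ 0) :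
    8 ≤ ⟪v, v⟫ ∨ ⟪v, v⟫ = 6 ∧ ∃ w x y z, Offender M N w x y z := by
  obtain ⟨w, x, y, z, h, rfl⟩ := mem_LMN_three.1 hv
  rcases h.eight_le_or_offender hΥ (mt toLp_three_eq_zero.2 hv0) with hge | ho
  · exact .inl (by rwa [inner_self_toLp_three])
  · exact .inr ⟨ho.inner_self_toLp, w, x, y, z, ho⟩

theorem IsLeechPair.exists_mem_LMN_inner_eq_eight (hΥ : IsLeechPair Υ M N) :
    ∃ v ∈ LMN M N 3, ⟪v, v⟫ = 8 := by
  have hnorm_int (x : V) (hx : x ∈ M) : ∃ n : ℤ, ⟪x, x⟫ = n := hΥ.isEvenLat_left.1 x hx x hx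
  obtain ⟨x, hx, -, hx4⟩ := exists_inner_eq_minNorm hnorm_int (by rw [hΥ.minNorm_left]; norm_num)
  rw [hΥ.minNorm_left] at hx4
  refine ⟨!₂[x, -x, 0], mem_LMN_three.2 ⟨0, x, -x, 0,
    ⟨N.zero_mem, hx, M.neg_mem hx, M.zero_mem, by simp⟩, by simp⟩, ?_⟩
  rw [inner_self_toLp_three, inner_neg_neg, hx4, inner_zero_left]
  norm_num

end MinNormLMN

theorem statement16_general {Υ M N : Submodule ℤ V} (h : IsLeechPair Υ M N) :
    ((∃ w x y z : V, SuperOffender M N w x y z) → minNorm (LMN M N 3) = 6) ∧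
    ((¬ ∃ w x y z : V, SuperOffender M N w x y z) → minNorm (LMN M N 3) = 8) := by
  constructor
  · rintro ⟨w, x, y, z, ho, -⟩
    refine minNorm_eq_of_inner_eq ho.toLp_mem_LMN ho.inner_self_toLp (by norm_num)
      fun v hv hv0 => ?_
    rcases h.eight_le_or_exists_offender hv hv0 with hge | ⟨heq, -⟩
    · linarith
    · exact heq.ge
  · intro hno
    obtain ⟨u, hu, hu8⟩ := h.exists_mem_LMN_inner_eq_eight
    refine minNorm_eq_of_inner_eq hu hu8 (by norm_num) fun v hv hv0 => ?_
    refine (h.eight_le_or_exists_offender hv hv0).resolve_right ?_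
    rintro ⟨-, w, x, y, z, ho⟩
    exact hno (ho.exists_superOffender h)

/-- in the Leech polarization setup, `μ(L(M,N,3))` is 6 if a super offender
exists, and 8 otherwise. -/
theorem statement16 (Υ M N : Submodule ℤ V) (h : LeechSetup Υ M N) :
    ((∃ w x y z : V, SuperOffender M N w x y z) → minNorm (LMN M N 3) = 6) ∧
    ((¬ ∃ w x y z : V, SuperOffender M N w x y z) → minNorm (LMN M N 3) = 8) :=
  statement16_general h.isLeechPair
end
end

section
/- For each n ∈ {96, 120, 128}, there exists a positive definite even unimodular lattice of rank n whose minimum norm is exactly 8. (For ranks 96 and 120 the extremal bounds are 10 and 12 respectively; for rank 128 the extremal bound is 12.) -/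
noncomputable section

open scoped RealInnerProductSpace Pointwise
open Module

variable {V : Type*} [NormedAddCommGroup V] [InnerProductSpace ℝ V]

/-!
Call a lattice `L` together with an isometry `f` admissible if `L` is even and equal to its dual,
and if `√2 f` maps `L` to itself and acts as a root of `t² - t + 2`, i.e. as `(1 + √-7) / 2`. As
the two roots have sum `1` and product `2`, the images `f L` and `f⁻¹ L` form a polarization of
`(√2)⁻¹ L`, and Turyn's construction `L(f L, f⁻¹ L, k)` in `V^k` is again even and self-dual. It
is preserved by `√2 f` acting on all coordinates, so the construction can be iterated.

If `L` has minimum `μ`, a nonzero vector of `L(f L, f⁻¹ L, k)` with a vanishing coordinate has all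
its coordinates in `f L` and their sum in `√2 L`, so its norm is at least `2μ`; a vector without
one has norm at least `k μ / 2`, hence at least the next even integer. Thus each step multiplies
the minimum by exactly `2` as soon as `k ≥ 4`, and `k = 3` is enough when `μ = 2`. Starting from
the lattice `E₈` of minimum `2`, three copies give the Leech lattice, of minimum `4`, and four
copies a lattice of rank `32` with the same minimum; four or five further copies bring the minimum
to `8`.
-/

section Lattice

variable {W : Type*} [NormedAddCommGroup W] [InnerProductSpace ℝ W] {L : Submodule ℤ V}

/-- The norms `⟪x, x⟫` of the nonzero vectors of `L`, whose infimum is `minNorm L`. -/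
def nonzeroNorms (L : Submodule ℤ V) : Set ℝ :=
  {r | ∃ x ∈ L, x ≠ 0 ∧ ⟪x, x⟫ = r}

lemma mem_lowerBounds_nonzeroNorms {μ : ℝ} :
    μ ∈ lowerBounds (nonzeroNorms L) ↔ ∀ x ∈ L, x ≠ 0 → μ ≤ ⟪x, x⟫ :=
  ⟨fun h x hx h0 => h ⟨x, hx, h0, rfl⟩, fun h _ ⟨x, hx, h0, hr⟩ => hr ▸ h x hx h0⟩

/-- The dual lattice of `L` in `V`: the vectors having integral inner product with all of `L`. -/
def dualLat (L : Submodule ℤ V) : Submodule ℤ V :=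
  LinearMap.BilinForm.dualSubmodule (innerₗ V) L

lemma mem_dualLat {v : V} : v ∈ dualLat L ↔ ∀ x ∈ L, ∃ n : ℤ, ⟪v, x⟫ = n := by
  simp only [dualLat, LinearMap.BilinForm.mem_dualSubmodule, Submodule.mem_one,
    innerₗ_apply_apply, algebraMap_int_eq, eq_intCast, eq_comm]

lemma isIntegralLat_iff_le_dualLat : IsIntegralLat L ↔ L ≤ dualLat L :=
  forall₂_congr fun _ _ => mem_dualLat.symm

-- Integrality of `⟪x, y⟫` follows from polarizing the even norm of `x + y`.
lemma isEvenLat_of_even_norms (h : ∀ x ∈ L, ∃ n : ℤ, ⟪x, x⟫ = 2 * (n : ℝ)) : IsEvenLat L := by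
  refine ⟨fun x hx y hy => ?_, h⟩
  obtain ⟨a, ha⟩ := h x hx
  obtain ⟨b, hb⟩ := h y hy
  obtain ⟨c, hc⟩ := h _ (L.add_mem hx hy)
  rw [real_inner_add_add_self] at hc
  exact ⟨c - a - b, by push_cast; linarith⟩

lemma IsIntegralLat.one_le_inner_self (hL : IsIntegralLat L) {x : V} (hx : x ∈ L) (h0 : x ≠ 0) :
    1 ≤ ⟪x, x⟫ := by
  obtain ⟨n, hn⟩ := hL x hx x hx
  have hpos := real_inner_self_pos.2 h0
  rw [hn] at hpos ⊢
  exact_mod_cast hpos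

lemma IsEvenLat.two_mem_lowerBounds (hL : IsEvenLat L) : 2 ∈ lowerBounds (nonzeroNorms L) := by
  refine mem_lowerBounds_nonzeroNorms.2 fun x hx h0 => ?_
  obtain ⟨n, hn⟩ := hL.2 x hx
  have hpos : (0 : ℝ) < n := by linarith [real_inner_self_pos.2 h0]
  have hone : (1 : ℝ) ≤ n := by exact_mod_cast hpos
  linarith

lemma IsIntegralLat.discreteTopology (hL : IsIntegralLat L) : DiscreteTopology L :=
  DiscreteTopology.of_forall_le_norm one_pos fun x hx => by
    have h := hL.one_le_inner_self x.2 (by simpa using hx)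
    rwa [real_inner_self_eq_norm_sq, one_le_sq_iff₀ (norm_nonneg _)] at h

-- A vector orthogonal to `L` spans a real line inside the dual lattice, hence inside `L`.
lemma span_eq_top_of_dualLat_le [FiniteDimensional ℝ V] (hL : IsIntegralLat L)
    (hdual : dualLat L ≤ L) : Submodule.span ℝ (L : Set V) = ⊤ := by
  rw [← Submodule.orthogonal_eq_bot_iff, Submodule.eq_bot_iff]
  intro v hv
  by_contra h0
  have hline (t : ℝ) : t • v ∈ L := by
    refine hdual (mem_dualLat.2 fun x hx => ⟨0, ?_⟩)
    rw [real_inner_smul_left, (Submodule.mem_orthogonal' _ v).1 hv x (Submodule.subset_span hx)]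
    simp
  have : 0 < ‖v‖ := norm_pos_iff.2 h0
  have hshort := hL.one_le_inner_self (hline (2 * ‖v‖)⁻¹) (by simp [h0])
  rw [real_inner_self_eq_norm_sq, norm_smul, norm_inv, norm_mul, norm_norm,
    Real.norm_ofNat] at hshort
  field_simp at hshort
  norm_num at hshort

lemma exists_dual_vectors {ι : Type*} [Finite ι] [DecidableEq ι] (b : Basis ι ℝ V) :
    ∃ d : ι → V, ∀ i j, ⟪d i, b j⟫ = if j = i then 1 else 0 := by
  have hnondeg : (innerₗ V).Nondegenerate :=
    ⟨fun x hx => inner_self_eq_zero.1 (hx x), fun x hx => inner_self_eq_zero.1 (hx x)⟩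
  exact ⟨_, LinearMap.BilinForm.apply_dualBasis_left hnondeg b⟩

lemma inner_eq_sum_repr {ι : Type*} [Fintype ι] (b : Basis ι ℤ L) (v : V) (x : L) :
    ⟪v, (x : V)⟫ = ∑ j, b.repr x j * ⟪v, (b j : V)⟫ := by
  conv_lhs => rw [← b.sum_repr x, Submodule.coe_sum, inner_sum]
  simp only [Submodule.coe_smul, ← Int.cast_smul_eq_zsmul ℝ, real_inner_smul_right]

section SelfDual

variable [FiniteDimensional ℝ V]

lemma isLat_of_dualLat_le (hL : IsIntegralLat L) (hdual : dualLat L ≤ L) : IsLat L := by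
  have := hL.discreteTopology
  have : IsZLattice ℝ L := ⟨span_eq_top_of_dualLat_le hL hdual⟩
  exact ⟨ZLattice.FG ℝ L, IsZLattice.span_top⟩

-- The vectors dual to `b` lie in `L`, so their coordinates are an integral inverse of the Gram
-- matrix, whose determinant is therefore a positive unit of `ℤ`.
lemma det_gram_eq_one {ι : Type*} [Fintype ι] [DecidableEq ι] [DiscreteTopology L]
    [IsZLattice ℝ L] (hL : IsIntegralLat L) (hdual : dualLat L ≤ L) (b : Basis ι ℤ L) :
    (Matrix.gram ℝ fun i => (b i : V)).det = 1 := by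
  choose G hG using fun i j => hL (b i) (b i).2 (b j) (b j).2
  have hgram : Matrix.gram ℝ (fun i => (b i : V)) =
      (Int.castRingHom ℝ).mapMatrix (Matrix.of G) := by
    ext i j
    exact hG i j
  have hcoe : ⇑(b.ofZLatticeBasis ℝ L) = fun i => (b i : V) :=
    funext (b.ofZLatticeBasis_apply ℝ L)
  have hpos : 0 < (Matrix.of G).det := by
    have hli := (b.ofZLatticeBasis ℝ L).linearIndependent
    rw [hcoe] at hli
    have := (Matrix.posDef_gram_of_linearIndependent hli).det_pos
    rwa [hgram, ← RingHom.map_det, eq_intCast, Int.cast_pos] at this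
  obtain ⟨d, hd⟩ := exists_dual_vectors (b.ofZLatticeBasis ℝ L)
  simp only [hcoe] at hd
  have hdL (i) : d i ∈ L := by
    refine hdual (mem_dualLat.2 fun x hx => ⟨b.repr ⟨x, hx⟩ i, ?_⟩)
    rw [inner_eq_sum_repr b (d i) ⟨x, hx⟩]
    simp [hd]
  have hinv : (Matrix.of fun i j => b.repr ⟨d i, hdL i⟩ j) * Matrix.of G = 1 := by
    ext i k
    have h := inner_eq_sum_repr b (b k : V) ⟨d i, hdL i⟩
    rw [real_inner_comm, hd] at h
    simp only [real_inner_comm (b _ : V) (b k : V), hG] at h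
    rw [Matrix.mul_apply, Matrix.one_apply]
    simp only [Matrix.of_apply, eq_comm (a := i)]
    exact_mod_cast h.symm
  have hunit := Int.isUnit_iff.1 (Matrix.isUnit_det_of_left_inverse hinv)
  rw [hgram, ← RingHom.map_det, hunit.resolve_right (by omega), map_one]

lemma isUnimodularLat_of_dualLat_le (hL : IsIntegralLat L) (hdual : dualLat L ≤ L) :
    IsUnimodularLat L := by
  have := hL.discreteTopology
  have : IsZLattice ℝ L := ⟨span_eq_top_of_dualLat_le hL hdual⟩
  have := ZLattice.module_free ℝ L
  have := ZLattice.module_finite ℝ L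
  exact ⟨_, Module.finBasis ℤ L, det_gram_eq_one hL hdual _⟩

end SelfDual

/-- The image of the lattice `L` under the isometry `f`. -/
def mapLat (f : V ≃ₗᵢ[ℝ] W) (L : Submodule ℤ V) : Submodule ℤ W :=
  L.map (f.toLinearEquiv.restrictScalars ℤ : V →ₗ[ℤ] W)

lemma mem_mapLat {f : V ≃ₗᵢ[ℝ] W} {y : W} : y ∈ mapLat f L ↔ f.symm y ∈ L :=
  Submodule.mem_map_equiv L (e := f.toLinearEquiv.restrictScalars ℤ)

lemma apply_mem_mapLat {f : V ≃ₗᵢ[ℝ] W} {x : V} : f x ∈ mapLat f L ↔ x ∈ L := by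
  rw [mem_mapLat, f.symm_apply_apply]

lemma IsIntegralLat.mapLat (hL : IsIntegralLat L) (f : V ≃ₗᵢ[ℝ] W) :
    IsIntegralLat (mapLat f L) := fun x hx y hy => by
  simpa only [f.symm.inner_map_map] using hL _ (mem_mapLat.1 hx) _ (mem_mapLat.1 hy)

lemma IsEvenLat.mapLat (hL : IsEvenLat L) (f : V ≃ₗᵢ[ℝ] W) : IsEvenLat (mapLat f L) :=
  ⟨hL.1.mapLat f, fun x hx => by
    simpa only [f.symm.inner_map_map] using hL.2 _ (mem_mapLat.1 hx)⟩

lemma dualLat_mapLat (f : V ≃ₗᵢ[ℝ] W) : dualLat (mapLat f L) = mapLat f (dualLat L) := by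
  ext v
  simp only [mem_mapLat, mem_dualLat, f.surjective.forall, f.symm_apply_apply,
    ← f.inner_map_map (f.symm v), f.apply_symm_apply]

lemma nonzeroNorms_mapLat (f : V ≃ₗᵢ[ℝ] W) : nonzeroNorms (mapLat f L) = nonzeroNorms L := by
  ext r
  simp only [nonzeroNorms, f.surjective.exists, apply_mem_mapLat, f.inner_map_map, ne_eq,
    EmbeddingLike.map_eq_zero_iff]

lemma exists_evenUnimodular_euclideanSpace [FiniteDimensional ℝ V] (hL : IsEvenLat L)
    (hdual : dualLat L ≤ L) {μ : ℝ} (hμ : IsLeast (nonzeroNorms L) μ) {n : ℕ}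
    (hn : finrank ℝ V = n) :
    ∃ L' : Submodule ℤ (EuclideanSpace ℝ (Fin n)),
      IsLat L' ∧ IsEvenLat L' ∧ IsUnimodularLat L' ∧ minNorm L' = μ := by
  subst hn
  let f := (stdOrthonormalBasis ℝ V).repr
  have hL' : IsEvenLat (mapLat f L) := hL.mapLat f
  have hdual' : dualLat (mapLat f L) ≤ mapLat f L := by
    rw [dualLat_mapLat]
    exact Submodule.map_mono hdual
  refine ⟨mapLat f L, isLat_of_dualLat_le hL'.1 hdual', hL',
    isUnimodularLat_of_dualLat_le hL'.1 hdual', ?_⟩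
  rw [← nonzeroNorms_mapLat f] at hμ
  exact hμ.csInf_eq

end Lattice

section Gluing

variable {E : Type*} [NormedAddCommGroup E] {M N : Submodule ℤ E} {k : ℕ}

lemma mem_LsubM {v : PiLp 2 fun _ : Fin k => E} :
    v ∈ LsubM M N k ↔ (∀ i, v i ∈ M) ∧ ∑ i, v i ∈ M ⊓ N :=
  Iff.rfl

lemma mem_LMN {v : PiLp 2 fun _ : Fin k => E} :
    v ∈ LMN M N k ↔ ∃ y ∈ N, (∀ i, v i - y ∈ M) ∧ ∑ i, (v i - y) ∈ M ⊓ N := by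
  constructor
  · intro hv
    obtain ⟨u, hu, w, ⟨y, hy, hw⟩, rfl⟩ := Submodule.mem_sup.1 hv
    refine ⟨y, hy, ?_⟩
    simpa only [PiLp.add_apply, hw, add_sub_cancel_right] using mem_LsubM.1 hu
  · rintro ⟨y, hy, hu⟩
    refine Submodule.mem_sup.2 ⟨v - WithLp.toLp 2 fun _ => y, hu, WithLp.toLp 2 fun _ => y,
      ⟨y, hy, fun _ => rfl⟩, sub_add_cancel _ _⟩

lemma single_mem_LMN {x : E} (hx : x ∈ M ⊓ N) (i : Fin k) : PiLp.single 2 i x ∈ LMN M N k := by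
  refine mem_LMN.2 ⟨0, N.zero_mem, fun j => ?_, ?_⟩
  · rw [sub_zero, PiLp.single_apply]
    split_ifs
    exacts [hx.1, M.zero_mem]
  · simpa [PiLp.single_apply] using hx

lemma single_sub_single_mem_LMN {x : E} (hx : x ∈ M) (i j : Fin k) :
    PiLp.single 2 i x - PiLp.single 2 j x ∈ LMN M N k := by
  refine mem_LMN.2 ⟨0, N.zero_mem, fun l => ?_, ?_⟩
  · rw [sub_zero, PiLp.sub_apply, PiLp.single_apply, PiLp.single_apply]
    refine M.sub_mem ?_ ?_ <;> split_ifs <;> first | exact hx | exact M.zero_mem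
  · simp [PiLp.single_apply]

lemma const_mem_LMN {y : E} (hy : y ∈ N) : WithLp.toLp 2 (fun _ : Fin k => y) ∈ LMN M N k :=
  mem_LMN.2 ⟨y, hy, by simp, by simp⟩

lemma mem_LsubM_of_apply_eq_zero {v : PiLp 2 fun _ : Fin k => E} (hv : v ∈ LMN M N k)
    {i : Fin k} (hi : v i = 0) : v ∈ LsubM M N k := by
  obtain ⟨y, hy, hu, hsum⟩ := mem_LMN.1 hv
  have hyM : y ∈ M := by simpa [hi] using hu i
  refine mem_LsubM.2 ⟨fun j => by simpa using M.add_mem (hu j) hyM, ?_⟩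
  simpa using (M ⊓ N).add_mem hsum ((M ⊓ N).nsmul_mem ⟨hyM, hy⟩ k)

lemma map_mem_LMN {g : E →+ E} (hM : ∀ x ∈ M, g x ∈ M) (hN : ∀ y ∈ N, g y ∈ N)
    {v : PiLp 2 fun _ : Fin k => E} (hv : v ∈ LMN M N k) :
    WithLp.toLp 2 (fun i => g (v i)) ∈ LMN M N k := by
  obtain ⟨y, hy, hu, hsum⟩ := mem_LMN.1 hv
  refine mem_LMN.2 ⟨g y, hN y hy, fun i => ?_, ?_⟩
  · rw [PiLp.toLp_apply, ← map_sub]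
    exact hM _ (hu i)
  · simp only [← map_sub, ← map_sum]
    exact ⟨hM _ hsum.1, hN _ hsum.2⟩

end Gluing

section Polarization

variable {Υ M N : Submodule ℤ V} {k : ℕ}

lemma mem_two_smul {v : V} : v ∈ (2 : ℤ) • Υ ↔ ∃ u ∈ Υ, (2 : ℝ) • u = v := by
  simp only [Submodule.mem_smul_pointwise_iff_exists, ofNat_smul_eq_nsmul]

lemma mem_of_forall_inner_two_smul (hΥ : dualLat Υ ≤ (2 : ℤ) • Υ) {v : V}
    (hv : ∀ u ∈ Υ, ∃ n : ℤ, ⟪v, (2 : ℝ) • u⟫ = n) : v ∈ Υ := by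
  have hdual : (2 : ℝ) • v ∈ dualLat Υ := mem_dualLat.2 fun u hu => by
    simpa only [real_inner_smul_left, real_inner_smul_right] using hv u hu
  obtain ⟨u, hu, huv⟩ := mem_two_smul.1 (hΥ hdual)
  rwa [← smul_right_injective V two_ne_zero huv]

namespace IsPolarization

lemma symm (h : IsPolarization Υ M N) : IsPolarization Υ N M :=
  let ⟨hM, hN, hMint, hNint, hsup, hinf⟩ := h
  ⟨hN, hM, hNint, hMint, sup_comm N M ▸ hsup, inf_comm N M ▸ hinf⟩

lemma two_smul_mem_inf (h : IsPolarization Υ M N) {u : V} (hu : u ∈ Υ) :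
    (2 : ℝ) • u ∈ M ⊓ N := by
  rw [h.2.2.2.2.2]
  exact mem_two_smul.2 ⟨u, hu, rfl⟩

lemma dualLat_inf_le (h : IsPolarization Υ M N) : dualLat M ⊓ dualLat N ≤ dualLat Υ := by
  rintro v ⟨hM, hN⟩
  refine mem_dualLat.2 fun u hu => ?_
  obtain ⟨x, hx, y, hy, rfl⟩ := Submodule.mem_sup.1 (h.2.2.2.2.1 ▸ hu)
  obtain ⟨a, ha⟩ := mem_dualLat.1 hM x hx
  obtain ⟨b, hb⟩ := mem_dualLat.1 hN y hy
  exact ⟨a + b, by rw [inner_add_right, ha, hb, Int.cast_add]⟩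

lemma dualLat_left_le (h : IsPolarization Υ M N) (hΥ : dualLat Υ ≤ (2 : ℤ) • Υ) :
    dualLat M ≤ M := by
  intro v hv
  have hvΥ : v ∈ Υ := mem_of_forall_inner_two_smul hΥ fun u hu =>
    mem_dualLat.1 hv _ (h.two_smul_mem_inf hu).1
  obtain ⟨-, -, hMint, hNint, hsup, hinf⟩ := id h
  obtain ⟨x, hx, y, hy, rfl⟩ := Submodule.mem_sup.1 (hsup ▸ hvΥ)
  rw [isIntegralLat_iff_le_dualLat] at hMint hNint
  have hydual : y ∈ dualLat M := by simpa using (dualLat M).sub_mem hv (hMint hx)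
  have hyM : y ∈ M ⊓ N := hinf ▸ hΥ (h.dualLat_inf_le ⟨hydual, hNint hy⟩)
  exact M.add_mem hx hyM.1

lemma dualLat_right_le (h : IsPolarization Υ M N) (hΥ : dualLat Υ ≤ (2 : ℤ) • Υ) :
    dualLat N ≤ N :=
  h.symm.dualLat_left_le hΥ

end IsPolarization

lemma inner_piLp_single (v : PiLp 2 fun _ : Fin k => V) (i : Fin k) (x : V) :
    ⟪v, PiLp.single 2 i x⟫ = ⟪v i, x⟫ := by
  simp [PiLp.inner_apply, PiLp.single_apply, apply_ite]

lemma inner_piLp_const (v : PiLp 2 fun _ : Fin k => V) (y : V) :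
    ⟪v, WithLp.toLp 2 fun _ => y⟫ = ⟪∑ i, v i, y⟫ := by
  rw [PiLp.inner_apply, sum_inner]

lemma IsPolarization.dualLat_LMN_le (h : IsPolarization Υ M N) (hΥ : dualLat Υ ≤ (2 : ℤ) • Υ)
    (hk : 0 < k) : dualLat (LMN M N k) ≤ LMN M N k := by
  intro v hv
  rw [mem_dualLat] at hv
  let i₀ : Fin k := ⟨0, hk⟩
  have hcoord : v i₀ ∈ Υ := mem_of_forall_inner_two_smul hΥ fun u hu => by
    simpa only [inner_piLp_single] using hv _ (single_mem_LMN (h.two_smul_mem_inf hu) i₀)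
  have hdiff (i : Fin k) : v i - v i₀ ∈ M := h.dualLat_left_le hΥ <| mem_dualLat.2 fun x hx => by
    simpa only [inner_sub_right, inner_sub_left, inner_piLp_single]
      using hv _ (single_sub_single_mem_LMN hx i i₀)
  have hsum : ∑ i, v i ∈ N := h.dualLat_right_le hΥ <| mem_dualLat.2 fun y hy => by
    simpa only [inner_piLp_const] using hv _ (const_mem_LMN hy)
  obtain ⟨x, hx, y, hy, hxy⟩ := Submodule.mem_sup.1 (h.2.2.2.2.1 ▸ hcoord)
  have hmem (i : Fin k) : v i - y ∈ M := by
    simpa only [← hxy, sub_add_eq_sub_sub_swap, sub_add_cancel] using M.add_mem (hdiff i) hx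
  refine mem_LMN.2 ⟨y, hy, hmem, M.sum_mem fun i _ => hmem i, ?_⟩
  rw [Finset.sum_sub_distrib, Finset.sum_const]
  exact N.sub_mem hsum (N.nsmul_mem hy _)

lemma isEvenLat_LMN (hM : IsEvenLat M) (hN : IsEvenLat N) : IsEvenLat (LMN M N k) := by
  refine isEvenLat_of_even_norms fun v hv => ?_
  obtain ⟨y, hy, hu, hsum⟩ := mem_LMN.1 hv
  choose a ha using fun i => hM.2 _ (hu i)
  obtain ⟨b, hb⟩ := hN.1 _ hsum.2 y hy
  obtain ⟨c, hc⟩ := hN.2 y hy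
  have hcoord (i : Fin k) : ⟪v i, v i⟫ = 2 * a i + 2 * ⟪v i - y, y⟫ + 2 * c := by
    rw [← ha, ← hc, ← real_inner_add_add_self, sub_add_cancel]
  refine ⟨∑ i, a i + b + k * c, ?_⟩
  rw [PiLp.inner_apply, Finset.sum_congr rfl fun i _ => hcoord i, Finset.sum_add_distrib,
    Finset.sum_add_distrib, ← Finset.mul_sum, ← Finset.mul_sum, ← sum_inner, hb]
  simp
  ring

lemma IsPolarization.apply_mem_of_mem_LMN (h : IsPolarization Υ M N)
    {v : PiLp 2 fun _ : Fin k => V} (hv : v ∈ LMN M N k) (i : Fin k) : v i ∈ Υ := by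
  obtain ⟨y, hy, hu, -⟩ := mem_LMN.1 hv
  simpa using Υ.add_mem (h.1 (hu i)) (h.2.1 hy)

lemma IsPolarization.min_le_inner_of_mem_LsubM (h : IsPolarization Υ M N) {α β : ℝ}
    (hα : α ∈ lowerBounds (nonzeroNorms Υ)) (hβ : β ∈ lowerBounds (nonzeroNorms M))
    {v : PiLp 2 fun _ : Fin k => V} (hv : v ∈ LsubM M N k) (h0 : v ≠ 0) :
    min (2 * β) (4 * α) ≤ ⟪v, v⟫ := by
  rw [mem_lowerBounds_nonzeroNorms] at hα hβ
  obtain ⟨hvM, hsum⟩ := mem_LsubM.1 hv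
  obtain ⟨i, hi⟩ : ∃ i, v i ≠ 0 := by
    by_contra! hzero
    exact h0 (PiLp.ext hzero)
  rw [PiLp.inner_apply]
  by_cases hother : ∃ j, j ≠ i ∧ v j ≠ 0
  · obtain ⟨j, hji, hj⟩ := hother
    have hpair : ⟪v i, v i⟫ + ⟪v j, v j⟫ ≤ ∑ l, ⟪v l, v l⟫ :=
      Finset.add_le_sum (fun _ _ => real_inner_self_nonneg) (Finset.mem_univ i)
        (Finset.mem_univ j) hji.symm
    exact min_le_of_left_le (by linarith [hβ _ (hvM i) hi, hβ _ (hvM j) hj])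
  · push Not at hother
    rw [Fintype.sum_eq_single i hother, h.2.2.2.2.2] at hsum
    obtain ⟨u, hu, huv⟩ := mem_two_smul.1 hsum
    have hu0 : u ≠ 0 := by
      rintro rfl
      exact hi (by rw [← huv, smul_zero])
    rw [Fintype.sum_eq_single i fun j hj => by rw [hother j hj, inner_zero_left], ← huv,
      real_inner_smul_left, real_inner_smul_right]
    exact min_le_of_right_le (by linarith [hα u hu hu0])

lemma IsPolarization.min_mem_lowerBounds_LMN (h : IsPolarization Υ M N) {α β : ℝ}
    (hα : α ∈ lowerBounds (nonzeroNorms Υ)) (hβ : β ∈ lowerBounds (nonzeroNorms M)) :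
    min (k * α) (min (2 * β) (4 * α)) ∈ lowerBounds (nonzeroNorms (LMN M N k)) := by
  refine mem_lowerBounds_nonzeroNorms.2 fun v hv h0 => ?_
  by_cases hzero : ∃ i, v i = 0
  · obtain ⟨i, hi⟩ := hzero
    exact min_le_of_right_le
      (h.min_le_inner_of_mem_LsubM hα hβ (mem_LsubM_of_apply_eq_zero hv hi) h0)
  · push Not at hzero
    rw [mem_lowerBounds_nonzeroNorms] at hα
    refine min_le_of_left_le ?_
    calc k * α = ∑ _i : Fin k, α := by simp
      _ ≤ ∑ i, ⟪v i, v i⟫ :=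
        Finset.sum_le_sum fun i _ => hα _ (h.apply_mem_of_mem_LMN hv i) (hzero i)
      _ = ⟪v, v⟫ := (PiLp.inner_apply v v).symm

end Polarization

section Turyn

variable {L : Submodule ℤ V} {f : V ≃ₗᵢ[ℝ] V} {k : ℕ} {μ : ℝ}

/-- `√2 • f` maps the lattice `L` to itself and acts as a root of `t² - t + 2`, i.e. as the
algebraic integer `(1 + √-7) / 2`; the quadratic relation is stated for the isometry `f`, whose
inverse is its adjoint. -/
structure IsTurynIsometry (L : Submodule ℤ V) (f : V ≃ₗᵢ[ℝ] V) : Prop where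
  add_symm : ∀ x, f x + f.symm x = (√2)⁻¹ • x
  smul_mem : ∀ x ∈ L, √2 • f x ∈ L

lemma mem_inv_sqrt_two_smul {x : V} : x ∈ (√2)⁻¹ • L ↔ √2 • x ∈ L := by
  rw [Submodule.mem_smul_pointwise_iff_exists]
  constructor
  · rintro ⟨y, hy, rfl⟩
    rwa [smul_inv_smul₀ (by simp)]
  · exact fun hx => ⟨_, hx, inv_smul_smul₀ (by simp) x⟩

lemma mem_two_smul_inv_sqrt_two_smul {x : V} :
    x ∈ (2 : ℤ) • ((√2)⁻¹ • L) ↔ (√2)⁻¹ • x ∈ L := by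
  have hsqrt : (√2)⁻¹ * 2 = √2 := by
    rw [inv_mul_eq_div, Real.div_sqrt]
  rw [mem_two_smul]
  constructor
  · rintro ⟨u, hu, rfl⟩
    rwa [smul_smul, hsqrt, ← mem_inv_sqrt_two_smul]
  · refine fun hx => ⟨_, Submodule.smul_mem_pointwise_smul _ _ L hx, ?_⟩
    rw [smul_smul, mul_comm, hsqrt, smul_inv_smul₀ (by simp)]

lemma inner_sqrt_two_smul_self (x : V) : ⟪√2 • x, √2 • x⟫ = 2 * ⟪x, x⟫ := by
  rw [real_inner_smul_left, real_inner_smul_right, ← mul_assoc, Real.mul_self_sqrt zero_le_two]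

lemma dualLat_inv_sqrt_two_smul_le (hdual : dualLat L ≤ L) :
    dualLat ((√2)⁻¹ • L) ≤ (2 : ℤ) • ((√2)⁻¹ • L) := fun v hv =>
  mem_two_smul_inv_sqrt_two_smul.2 <| hdual <| mem_dualLat.2 fun x hx => by
    simpa only [real_inner_smul_left, real_inner_smul_right] using
      mem_dualLat.1 hv _ (Submodule.smul_mem_pointwise_smul x _ L hx)

lemma half_mem_lowerBounds_inv_sqrt_two_smul (hμ : μ ∈ lowerBounds (nonzeroNorms L)) :
    μ / 2 ∈ lowerBounds (nonzeroNorms ((√2)⁻¹ • L)) := by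
  refine mem_lowerBounds_nonzeroNorms.2 fun x hx h0 => ?_
  have h := mem_lowerBounds_nonzeroNorms.1 hμ _ (mem_inv_sqrt_two_smul.1 hx) (by simp [h0])
  rw [inner_sqrt_two_smul_self] at h
  linarith

namespace IsTurynIsometry

lemma symm (hf : IsTurynIsometry L f) : IsTurynIsometry L f.symm where
  add_symm x := by rw [f.symm_symm, add_comm, hf.add_symm]
  smul_mem x hx := by
    have h : √2 • f.symm x = x - √2 • f x := by
      rw [eq_sub_iff_add_eq', ← smul_add, hf.add_symm, smul_inv_smul₀ (by simp)]
    exact h ▸ L.sub_mem hx (hf.smul_mem x hx)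

lemma mapLat_le (hf : IsTurynIsometry L f) : mapLat f L ≤ (√2)⁻¹ • L := fun x hx =>
  mem_inv_sqrt_two_smul.2 <| by simpa using hf.smul_mem _ (mem_mapLat.1 hx)

lemma sqrt_two_smul_mem_mapLat (hf : IsTurynIsometry L f) {x : V} (hx : x ∈ L) :
    √2 • x ∈ mapLat f L :=
  mem_mapLat.2 <| by simpa only [map_smul] using hf.symm.smul_mem x hx

lemma sqrt_two_smul_mem_inf (hf : IsTurynIsometry L f) {x : V} (hx : x ∈ L) :
    √2 • x ∈ mapLat f L ⊓ mapLat f.symm L :=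
  ⟨hf.sqrt_two_smul_mem_mapLat hx, hf.symm.sqrt_two_smul_mem_mapLat hx⟩

lemma isPolarization (hf : IsTurynIsometry L f) (hL : IsIntegralLat L) :
    IsPolarization ((√2)⁻¹ • L) (mapLat f L) (mapLat f.symm L) := by
  refine ⟨hf.mapLat_le, hf.symm.mapLat_le, hL.mapLat f, hL.mapLat f.symm,
    le_antisymm (sup_le hf.mapLat_le hf.symm.mapLat_le) fun z hz => ?_,
    le_antisymm (fun z hz => ?_) fun z hz => ?_⟩
  · obtain ⟨x, hx, rfl⟩ := (Submodule.mem_smul_pointwise_iff_exists _ _ _).1 hz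
    rw [← hf.add_symm]
    exact Submodule.add_mem_sup (apply_mem_mapLat.2 hx) (apply_mem_mapLat.2 hx)
  · rw [mem_two_smul_inv_sqrt_two_smul, ← hf.add_symm]
    exact L.add_mem (mem_mapLat.1 hz.2) (mem_mapLat.1 hz.1)
  · rw [← smul_inv_smul₀ (by simp : √2 ≠ 0) z]
    exact hf.sqrt_two_smul_mem_inf (mem_two_smul_inv_sqrt_two_smul.1 hz)

end IsTurynIsometry

/-- Turyn's construction: the lattice `L(f L, f⁻¹ L, k)` obtained from the two images of `L`. -/
def turynLat (L : Submodule ℤ V) (f : V ≃ₗᵢ[ℝ] V) (k : ℕ) :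
    Submodule ℤ (PiLp 2 fun _ : Fin k => V) :=
  LMN (mapLat f L) (mapLat f.symm L) k

/-- The isometry `f` acting on every coordinate of `V^k`. -/
def turynIsometry (f : V ≃ₗᵢ[ℝ] V) (k : ℕ) :
    (PiLp 2 fun _ : Fin k => V) ≃ₗᵢ[ℝ] PiLp 2 fun _ : Fin k => V :=
  LinearIsometryEquiv.piLpCongrRight 2 fun _ => f

lemma IsTurynIsometry.turyn (hf : IsTurynIsometry L f) (k : ℕ) :
    IsTurynIsometry (turynLat L f k) (turynIsometry f k) where
  add_symm v := PiLp.ext fun i => hf.add_symm (v i)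
  smul_mem v hv := by
    refine map_mem_LMN (g := (√2 • f.toLinearMap).toAddMonoidHom)
        (fun y hy => mem_mapLat.2 ?_) (fun y hy => mem_mapLat.2 ?_) hv <;>
      simpa using hf.smul_mem _ (mem_mapLat.1 hy)

/-- An even lattice `L` of minimum `μ` that is its own dual, together with an isometry `f`
to which Turyn's construction applies. -/
structure IsTurynLat (L : Submodule ℤ V) (f : V ≃ₗᵢ[ℝ] V) (μ : ℝ) : Prop
    extends IsTurynIsometry L f where
  isEvenLat : IsEvenLat L
  dualLat_le : dualLat L ≤ L
  isLeast : IsLeast (nonzeroNorms L) μ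

namespace IsTurynLat

lemma two_mul_mem_nonzeroNorms (hL : IsTurynLat L f μ) (hk : 0 < k) :
    2 * μ ∈ nonzeroNorms (turynLat L f k) := by
  obtain ⟨x, hx, h0, rfl⟩ := hL.isLeast.1
  refine ⟨PiLp.single 2 ⟨0, hk⟩ (√2 • x), single_mem_LMN (hL.sqrt_two_smul_mem_inf hx) _, ?_, ?_⟩
  · simp [h0]
  · rw [inner_piLp_single, PiLp.single_eq_same, inner_sqrt_two_smul_self]

-- Vectors without a zero coordinate only have norm at least `k * (μ / 2)`; as their norms are
-- even integers, this suffices when it rounds up to `2 * μ`.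
lemma two_mul_mem_lowerBounds (hL : IsTurynLat L f μ)
    (hround : ∀ n : ℤ, k * (μ / 2) ≤ 2 * n → 2 * μ ≤ 2 * n) :
    2 * μ ∈ lowerBounds (nonzeroNorms (turynLat L f k)) := by
  refine mem_lowerBounds_nonzeroNorms.2 fun v hv h0 => ?_
  have heven : IsEvenLat (turynLat L f k) :=
    isEvenLat_LMN (hL.isEvenLat.mapLat f) (hL.isEvenLat.mapLat f.symm)
  obtain ⟨n, hn⟩ := heven.2 v hv
  have hμM : μ ∈ lowerBounds (nonzeroNorms (mapLat f L)) := by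
    rw [nonzeroNorms_mapLat]
    exact hL.isLeast.2
  have hmin := mem_lowerBounds_nonzeroNorms.1
    ((hL.isPolarization hL.isEvenLat.1).min_mem_lowerBounds_LMN
      (half_mem_lowerBounds_inv_sqrt_two_smul hL.isLeast.2) hμM) v hv h0
  rw [show 4 * (μ / 2) = 2 * μ by ring, min_self, hn, min_le_iff] at hmin
  rw [hn]
  exact hmin.elim (hround n) id

theorem turyn (hL : IsTurynLat L f μ)
    (hround : ∀ n : ℤ, k * (μ / 2) ≤ 2 * n → 2 * μ ≤ 2 * n) :
    IsTurynLat (turynLat L f k) (turynIsometry f k) (2 * μ) := by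
  have hk : 0 < k := by
    obtain ⟨x, -, h0, rfl⟩ := hL.isLeast.1
    refine Nat.pos_of_ne_zero ?_
    rintro rfl
    have hnonpos := hround 0 (by simp)
    rw [Int.cast_zero, mul_zero] at hnonpos
    linarith [real_inner_self_pos.2 h0]
  exact
    { hL.toIsTurynIsometry.turyn k with
      isEvenLat := isEvenLat_LMN (hL.isEvenLat.mapLat f) (hL.isEvenLat.mapLat f.symm)
      dualLat_le := (hL.isPolarization hL.isEvenLat.1).dualLat_LMN_le
        (dualLat_inv_sqrt_two_smul_le hL.dualLat_le) hk
      isLeast := ⟨hL.two_mul_mem_nonzeroNorms hk, hL.two_mul_mem_lowerBounds hround⟩ }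

lemma turyn_of_four_le (hL : IsTurynLat L f μ) (hk : 4 ≤ k) :
    IsTurynLat (turynLat L f k) (turynIsometry f k) (2 * μ) :=
  hL.turyn fun n hn => hn.trans' <| by
    have hμ : 0 ≤ μ := by
      obtain ⟨x, -, -, rfl⟩ := hL.isLeast.1
      exact real_inner_self_nonneg
    calc 2 * μ = 4 * (μ / 2) := by ring
      _ ≤ k * (μ / 2) := by
        gcongr
        exact_mod_cast hk

end IsTurynLat

end Turyn

section ConstructionA

variable {ι : Type*} {C : Submodule (ZMod 2) (ι → ZMod 2)}

/-- Construction A: the lattice of the vectors `(√2)⁻¹ x` with `x` an integral vector reducing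
modulo `2` to a word of the binary code `C`. -/
def constructionA (C : Submodule (ZMod 2) (ι → ZMod 2)) :
    Submodule ℤ (EuclideanSpace ℝ ι) where
  carrier := {v | ∃ x : ι → ℤ, (fun i => (x i : ZMod 2)) ∈ C ∧ ∀ i, √2 * v i = x i}
  add_mem' := by
    rintro v w ⟨x, hx, hv⟩ ⟨y, hy, hw⟩
    refine ⟨x + y, ?_, fun i => ?_⟩
    · convert C.add_mem hx hy
      simp
    · simp [mul_add, hv, hw]
  zero_mem' := by
    refine ⟨0, ?_, by simp⟩
    convert C.zero_mem
    simp
  smul_mem' := by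
    rintro n v ⟨x, hx, hv⟩
    refine ⟨n • x, ?_, fun i => ?_⟩
    · convert C.smul_mem (n : ZMod 2) hx
      simp
    · simp [mul_left_comm, hv]

lemma mem_constructionA {v : EuclideanSpace ℝ ι} :
    v ∈ constructionA C ↔ ∃ x : ι → ℤ, (fun i => (x i : ZMod 2)) ∈ C ∧ ∀ i, √2 * v i = x i :=
  Iff.rfl

lemma single_sqrt_two_mem_constructionA [DecidableEq ι] (i : ι) :
    EuclideanSpace.single i √2 ∈ constructionA C := by
  refine mem_constructionA.2 ⟨Pi.single i 2, ?_, fun j => ?_⟩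
  · convert C.zero_mem with j
    rw [Pi.single_apply]
    split_ifs <;> rfl
  · rw [PiLp.single_apply, Pi.single_apply]
    split_ifs <;> simp

variable [Fintype ι]

lemma two_mul_inner_eq_dotProduct {v w : EuclideanSpace ℝ ι} {x y : ι → ℤ}
    (hv : ∀ i, √2 * v i = x i) (hw : ∀ i, √2 * w i = y i) :
    2 * ⟪v, w⟫ = ((x ⬝ᵥ y : ℤ) : ℝ) := by
  rw [← Real.mul_self_sqrt zero_le_two, mul_assoc, ← real_inner_smul_left,
    ← real_inner_smul_right, PiLp.inner_apply, dotProduct, Int.cast_sum]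
  refine Finset.sum_congr rfl fun i _ => ?_
  rw [PiLp.smul_apply, PiLp.smul_apply, smul_eq_mul, smul_eq_mul, hv, hw]
  simp [mul_comm]

lemma dotProduct_self_modEq_hammingNorm (x : ι → ℤ) :
    x ⬝ᵥ x ≡ hammingNorm (fun i => (x i : ZMod 2)) [ZMOD 4] := by
  have hcount : (hammingNorm (fun i => (x i : ZMod 2)) : ℤ) =
      ∑ i, if (x i : ZMod 2) ≠ 0 then 1 else 0 := by
    rw [hammingNorm, Finset.natCast_card_filter]
  rw [hcount]
  refine Int.ModEq.sum fun i _ => ?_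
  rw [← pow_two]
  split_ifs with hodd
  · rw [Ne, ZMod.intCast_eq_zero_iff_even, Int.not_even_iff_odd] at hodd
    exact Int.sq_mod_four_eq_one_of_odd hodd
  · rw [not_not, ZMod.intCast_eq_zero_iff_even] at hodd
    exact Int.modEq_zero_iff_dvd.2 (pow_dvd_pow_of_dvd hodd.two_dvd 2)

lemma isEvenLat_constructionA (hC : ∀ c ∈ C, 4 ∣ hammingNorm c) :
    IsEvenLat (constructionA C) := by
  refine isEvenLat_of_even_norms fun v ⟨x, hx, hv⟩ => ?_
  obtain ⟨n, hn⟩ : (4 : ℤ) ∣ x ⬝ᵥ x :=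
    (dotProduct_self_modEq_hammingNorm x).dvd_iff.2 (by exact_mod_cast hC _ hx)
  have hnorm := two_mul_inner_eq_dotProduct hv hv
  rw [hn] at hnorm
  push_cast at hnorm
  exact ⟨n, by linarith⟩

lemma dualLat_constructionA_le (hC : ∀ y, (∀ c ∈ C, y ⬝ᵥ c = 0) → y ∈ C) :
    dualLat (constructionA C) ≤ constructionA C := by
  classical
  intro v hv
  rw [mem_dualLat] at hv
  choose y hy using fun i => hv _ (single_sqrt_two_mem_constructionA i)
  simp only [EuclideanSpace.inner_single_right, conj_trivial] at hy
  refine ⟨y, hC _ fun c hc => ?_, hy⟩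
  let x : ι → ℤ := fun i => (c i).val
  have hx : (fun i => (x i : ZMod 2)) = c := by
    funext i
    simp [x]
  let w : EuclideanSpace ℝ ι := WithLp.toLp 2 fun i => (√2)⁻¹ * x i
  have hw (i : ι) : √2 * w i = x i := mul_inv_cancel_left₀ (by simp) _
  obtain ⟨n, hn⟩ := hv w (mem_constructionA.2 ⟨x, hx ▸ hc, hw⟩)
  have hdot : y ⬝ᵥ x = 2 * n := by
    have h := two_mul_inner_eq_dotProduct hy hw
    rw [hn] at h
    exact_mod_cast h.symm
  calc (fun i => (y i : ZMod 2)) ⬝ᵥ c = ((y ⬝ᵥ x : ℤ) : ZMod 2) := by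
        simp [← hx, dotProduct]
    _ = 0 := by
        rw [hdot, ZMod.intCast_eq_zero_iff_even]
        exact even_two_mul n

lemma isLeast_nonzeroNorms_constructionA [Nonempty ι] (hC : ∀ c ∈ C, 4 ∣ hammingNorm c) :
    IsLeast (nonzeroNorms (constructionA C)) 2 := by
  classical
  refine ⟨⟨_, single_sqrt_two_mem_constructionA (Classical.arbitrary ι), ?_, ?_⟩,
    (isEvenLat_constructionA hC).two_mem_lowerBounds⟩
  · simp
  · rw [EuclideanSpace.inner_single_left]
    simp

end ConstructionA

section OrthogonalIsometry

variable {ι : Type*} [Fintype ι] [DecidableEq ι]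

/-- The linear isometry of Euclidean space given by an orthogonal matrix. -/
def orthogonalIsometry (Q : Matrix.orthogonalGroup ι ℝ) :
    EuclideanSpace ℝ ι ≃ₗᵢ[ℝ] EuclideanSpace ℝ ι :=
  Unitary.linearIsometryEquiv
    ⟨Matrix.toEuclideanCLM (𝕜 := ℝ) Q.1, Unitary.map_mem Matrix.toEuclideanCLM Q.2⟩

lemma orthogonalIsometry_apply (Q : Matrix.orthogonalGroup ι ℝ) (v : EuclideanSpace ℝ ι) :
    orthogonalIsometry Q v = Matrix.toEuclideanCLM (𝕜 := ℝ) Q.1 v :=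
  rfl

lemma orthogonalIsometry_symm_apply (Q : Matrix.orthogonalGroup ι ℝ) (v : EuclideanSpace ℝ ι) :
    (orthogonalIsometry Q).symm v = Matrix.toEuclideanCLM (𝕜 := ℝ) Q.1.transpose v := by
  rw [← Matrix.conjTranspose_eq_transpose_of_trivial, ← Matrix.star_eq_conjTranspose, map_star]
  rfl

end OrthogonalIsometry

section E8

/-- A parity check matrix of the extended Hamming code of length `8`: below a row of ones, the
translates of `{0, 1, 2, 4}` modulo `7`, which are the complements of the lines of a Fano plane. -/
def fanoMatrix : Matrix (Fin 8) (Fin 8) ℤ :=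
  !![1, 1, 1, 1, 1, 1, 1, 1;
     0, 1, 1, 1, 0, 1, 0, 0;
     0, 0, 1, 1, 1, 0, 1, 0;
     0, 0, 0, 1, 1, 1, 0, 1;
     0, 1, 0, 0, 1, 1, 1, 0;
     0, 0, 1, 0, 0, 1, 1, 1;
     0, 1, 0, 1, 0, 0, 1, 1;
     0, 1, 1, 0, 1, 0, 0, 1]

/-- The extended Hamming code of length `8`. -/
def hammingCode : Submodule (ZMod 2) (Fin 8 → ZMod 2) :=
  LinearMap.ker (fanoMatrix.map (Int.castRingHom (ZMod 2))).mulVecLin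

lemma mem_hammingCode {c : Fin 8 → ZMod 2} :
    c ∈ hammingCode ↔ (fanoMatrix.map (Int.castRingHom (ZMod 2))).mulVec c = 0 :=
  Iff.rfl

lemma intCast_mem_hammingCode {x : Fin 8 → ℤ} :
    (fun i => (x i : ZMod 2)) ∈ hammingCode ↔ ∃ t, fanoMatrix.mulVec x = (2 : ℤ) • t := by
  have hcast (i : Fin 8) := RingHom.map_mulVec (Int.castRingHom (ZMod 2)) fanoMatrix x i
  rw [mem_hammingCode, funext_iff]
  simp only [Function.comp_def, eq_intCast] at hcast
  simp only [← hcast, Pi.zero_apply, ZMod.intCast_eq_zero_iff_even, even_iff_two_dvd, dvd_def,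
    Classical.skolem, funext_iff, Pi.smul_apply, smul_eq_mul]

lemma four_dvd_hammingNorm : ∀ c ∈ hammingCode, 4 ∣ hammingNorm c := by
  simp only [mem_hammingCode]
  decide +kernel

lemma fanoMatrix_mul_transpose_mod_two :
    fanoMatrix.map (Int.castRingHom (ZMod 2)) *
      (fanoMatrix.map (Int.castRingHom (ZMod 2))).transpose = 0 := by
  decide +kernel

lemma mem_hammingCode_of_orthogonal (y : Fin 8 → ZMod 2) (hy : ∀ c ∈ hammingCode, y ⬝ᵥ c = 0) :
    y ∈ hammingCode := by
  rw [mem_hammingCode]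
  funext i
  have hrow : (fanoMatrix.map (Int.castRingHom (ZMod 2))) i ∈ hammingCode := by
    rw [mem_hammingCode]
    funext j
    exact congrFun (congrFun fanoMatrix_mul_transpose_mod_two j) i
  exact (dotProduct_comm _ _).trans (hy _ hrow)

/-- The skew Hadamard matrix of order `8` obtained from `fanoMatrix` by replacing `0` by `-1`. -/
def skewHadamard : Matrix (Fin 8) (Fin 8) ℤ :=
  2 • fanoMatrix - Matrix.of 1

lemma skewHadamard_mul_transpose :
    skewHadamard.map (Int.castRingHom ℝ) * (skewHadamard.map (Int.castRingHom ℝ)).transpose =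
      (8 : ℝ) • 1 := by
  have h : (Int.castRingHom ℝ).mapMatrix (skewHadamard * skewHadamard.transpose) = 8 := by
    rw [show skewHadamard * skewHadamard.transpose = 8 by decide +kernel, map_ofNat]
  rw [map_mul, RingHom.mapMatrix_apply, RingHom.mapMatrix_apply, Matrix.transpose_map] at h
  rwa [← Algebra.algebraMap_eq_smul_one, map_ofNat]

lemma skewHadamard_add_transpose :
    skewHadamard.map (Int.castRingHom ℝ) + (skewHadamard.map (Int.castRingHom ℝ)).transpose =
      (2 : ℝ) • 1 := by
  have h : (Int.castRingHom ℝ).mapMatrix (skewHadamard + skewHadamard.transpose) = 2 := by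
    rw [show skewHadamard + skewHadamard.transpose = 2 by decide +kernel, map_ofNat]
  rw [map_add, RingHom.mapMatrix_apply, RingHom.mapMatrix_apply, Matrix.transpose_map] at h
  rwa [← Algebra.algebraMap_eq_smul_one, map_ofNat]

lemma exists_mul_fanoMatrix_eq_skewHadamard :
    ∃ B K, B * fanoMatrix = skewHadamard ∧ fanoMatrix * B = (2 : ℤ) • K :=
  ⟨2 - Matrix.vecMulVec 1 (Pi.single 0 1),
    fanoMatrix - Matrix.vecMulVec ![4, 2, 2, 2, 2, 2, 2, 2] (Pi.single 0 1),
    by decide +kernel, by decide +kernel⟩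

lemma exists_skewHadamard_mulVec_eq_two_smul {x : Fin 8 → ℤ}
    (hx : (fun i => (x i : ZMod 2)) ∈ hammingCode) :
    ∃ y : Fin 8 → ℤ,
      skewHadamard.mulVec x = (2 : ℤ) • y ∧ (fun i => (y i : ZMod 2)) ∈ hammingCode := by
  obtain ⟨t, ht⟩ := intCast_mem_hammingCode.1 hx
  obtain ⟨B, K, hB, hK⟩ := exists_mul_fanoMatrix_eq_skewHadamard
  refine ⟨B.mulVec t, ?_, intCast_mem_hammingCode.2 ⟨K.mulVec t, ?_⟩⟩
  · rw [← hB, ← Matrix.mulVec_mulVec, ht, Matrix.mulVec_smul]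
  · rw [Matrix.mulVec_mulVec, hK, Matrix.smul_mulVec]

/-- The rotation `(2√2)⁻¹ W` of `ℝ⁸`, where `W` is `skewHadamard`. -/
def e8Rotation : Matrix.orthogonalGroup (Fin 8) ℝ :=
  ⟨(2 * √2)⁻¹ • skewHadamard.map (Int.castRingHom ℝ), by
    have hscal : (2 * √2)⁻¹ * (2 * √2)⁻¹ * 8 = 1 := by
      field_simp
      norm_num
    rw [Matrix.mem_orthogonalGroup_iff, Matrix.transpose_smul, Matrix.smul_mul, Matrix.mul_smul,
      skewHadamard_mul_transpose, smul_smul, smul_smul, hscal, one_smul]⟩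

/-- The `E₈` lattice. -/
def e8Lattice : Submodule ℤ (EuclideanSpace ℝ (Fin 8)) :=
  constructionA hammingCode

/-- The isometry of `ℝ⁸` to which Turyn's construction is applied. -/
def e8Isometry : EuclideanSpace ℝ (Fin 8) ≃ₗᵢ[ℝ] EuclideanSpace ℝ (Fin 8) :=
  orthogonalIsometry e8Rotation

lemma isTurynIsometry_e8 : IsTurynIsometry e8Lattice e8Isometry where
  add_symm v := by
    have hscal : (2 * √2)⁻¹ * 2 = (√2)⁻¹ := by
      field_simp
    rw [e8Isometry, orthogonalIsometry_apply, orthogonalIsometry_symm_apply, ← add_apply,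
      ← map_add, e8Rotation, Matrix.transpose_smul, ← smul_add, skewHadamard_add_transpose,
      smul_smul, hscal, map_smul, map_one]
    rfl
  smul_mem v hv := by
    obtain ⟨x, hx, hxv⟩ := mem_constructionA.1 hv
    obtain ⟨y, hy, hyC⟩ := exists_skewHadamard_mulVec_eq_two_smul hx
    refine mem_constructionA.2 ⟨y, hyC, fun i => ?_⟩
    have hWx : (skewHadamard.map (Int.castRingHom ℝ)).mulVec (√2 • v).ofLp i = 2 * y i := by
      rw [show (√2 • v).ofLp = Int.castRingHom ℝ ∘ x from funext hxv, ← RingHom.map_mulVec, hy]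
      simp
    calc √2 * (√2 • e8Isometry v) i = √2 * e8Isometry (√2 • v) i := by rw [map_smul]
      _ = √2 * ((2 * √2)⁻¹ * (2 * y i)) := by
        rw [← hWx, e8Isometry, orthogonalIsometry_apply, Matrix.ofLp_toEuclideanCLM, e8Rotation,
          Matrix.smul_mulVec, Pi.smul_apply, smul_eq_mul]
      _ = y i := by field_simp

lemma isTurynLat_e8 : IsTurynLat e8Lattice e8Isometry 2 :=
  { isTurynIsometry_e8 with
    isEvenLat := isEvenLat_constructionA four_dvd_hammingNorm
    dualLat_le := dualLat_constructionA_le mem_hammingCode_of_orthogonal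
    isLeast := isLeast_nonzeroNorms_constructionA four_dvd_hammingNorm }

end E8

lemma finrank_piLp [FiniteDimensional ℝ V] (k : ℕ) :
    finrank ℝ (PiLp 2 fun _ : Fin k => V) = finrank ℝ V * k := by
  rw [(WithLp.linearEquiv 2 ℝ (Fin k → V)).finrank_eq, finrank_pi_fintype]
  simp [mul_comm]

lemma isTurynLat_turynLat_e8 {j : ℕ} (hj : 3 ≤ j) :
    IsTurynLat (turynLat e8Lattice e8Isometry j) (turynIsometry e8Isometry j) (2 * 2) :=
  isTurynLat_e8.turyn fun n hn => by
    have hjn : (j : ℤ) ≤ 2 * n := by exact_mod_cast (by simpa using hn : (j : ℝ) ≤ 2 * n)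
    exact_mod_cast (by omega : (2 * 2 : ℤ) ≤ 2 * n)

theorem statement19_general {j k : ℕ} (hj : 3 ≤ j) (hk : 4 ≤ k) :
    ∃ L : Submodule ℤ (EuclideanSpace ℝ (Fin (8 * j * k))),
      IsLat L ∧ IsEvenLat L ∧ IsUnimodularLat L ∧ minNorm L = 8 := by
  have hL := (isTurynLat_turynLat_e8 hj).turyn_of_four_le hk
  rw [show (2 * (2 * 2) : ℝ) = 8 by norm_num] at hL
  exact exists_evenUnimodular_euclideanSpace hL.isEvenLat hL.dualLat_le hL.isLeast
    (by rw [finrank_piLp, finrank_piLp, finrank_euclideanSpace_fin])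

/-- for each `n ∈ {96, 120, 128}` there is a rank `n` even unimodular
lattice of minimum norm exactly 8. -/
theorem statement19 :
    ∀ n ∈ ({96, 120, 128} : Set ℕ),
      ∃ L : Submodule ℤ (EuclideanSpace ℝ (Fin n)),
        IsLat L ∧ IsEvenLat L ∧ IsUnimodularLat L ∧ minNorm L = 8 := by
  rintro n (rfl | rfl | rfl)
  · exact statement19_general (j := 3) (k := 4) le_rfl le_rfl
  · exact statement19_general (j := 3) (k := 5) le_rfl (Nat.le_succ 4)
  · exact statement19_general (j := 4) (k := 4) (Nat.le_succ 3) le_rfl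
end
end
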